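/- In X_6' (k = 6), for the class d = 4[L] − Σ_{i=1}^6 [E_i] (so a = 4, bᵢ = 1 for all i, and d·[E] = 2), the refined count of d-marked floor diagrams of genus 0 and type (∅,(1,1)) is N_q^{∅,(1,1)}(X_6',4[L]−Σ[E_i],0) = [2]_q⁴ + [4]_q² + 10[3]_q² + 67[2]_q² + 226. -/

import Mathlib

open LaurentPolynomial

open scoped Classical

noncomputable section FloorDiagrams

/-- The quantum integer `[n]_q = q^{−(n−1)/2} + q^{−(n−3)/2} + ⋯ + q^{(n−1)/2}`,
as a Laurent polynomial in the variable `t = q^{1/2}` (here `T m` denotes `t^m`). -/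
def qInt (n : ℕ) : LaurentPolynomial ℚ :=
  ∑ j ∈ Finset.range n, T (2 * (j : ℤ) - ((n : ℤ) - 1))

/-- A finite weighted oriented (multi)graph: `nV` vertices, `nE` edges, each edge `e`
having a source `src e`, a target `tgt e` and a positive integer weight `w e`. -/
structure WOGraph where
  nV : ℕ
  nE : ℕ
  src : Fin nE → Fin nV
  tgt : Fin nE → Fin nV
  w : Fin nE → ℕ
  w_pos : ∀ e, 0 < w e

namespace WOGraph

variable (G : WOGraph)

/-- The edge `e` is adjacent to the vertex `v`. -/
def Adj (e : Fin G.nE) (v : Fin G.nV) : Prop :=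
  G.src e = v ∨ G.tgt e = v

/-- One step of the (unoriented) adjacency relation between vertices. -/
def connStep (u v : Fin G.nV) : Prop :=
  ∃ e, (G.src e = u ∧ G.tgt e = v) ∨ (G.src e = v ∧ G.tgt e = u)

/-- The graph is connected. -/
def Connected : Prop :=
  0 < G.nV ∧ ∀ u v, Relation.ReflTransGen G.connStep u v

/-- One step of the oriented relation between vertices. -/
def dirStep (u v : Fin G.nV) : Prop :=
  ∃ e, G.src e = u ∧ G.tgt e = v

/-- The oriented graph is acyclic: there is no non-trivial oriented cycle. -/
def Acyclic : Prop :=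
  ∀ v, ¬ Relation.TransGen G.dirStep v v

/-- The number of edges adjacent to a vertex (with multiplicity). -/
def degree (v : Fin G.nV) : ℕ :=
  (Finset.univ.filter fun e => G.src e = v).card +
    (Finset.univ.filter fun e => G.tgt e = v).card

/-- A leaf is a vertex adjacent to exactly one edge. -/
def IsLeaf (v : Fin G.nV) : Prop := G.degree v = 1

/-- `Vert^∞(G)`: leaves all of whose adjacent edges are outgoing. -/
def InfVert (v : Fin G.nV) : Prop :=
  G.IsLeaf v ∧ ∀ e, G.Adj e v → G.src e = v

/-- `Edge^∞(G)`: edges adjacent to a vertex of `Vert^∞(G)`. -/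
def InfEdge (e : Fin G.nE) : Prop :=
  ∃ v, G.Adj e v ∧ G.InfVert v

/-- The divergence of a vertex: sum of weights of incoming edges minus sum of weights of
outgoing edges. -/
def div (v : Fin G.nV) : ℤ :=
  (∑ e ∈ Finset.univ.filter (fun e => G.tgt e = v), (G.w e : ℤ)) -
    (∑ e ∈ Finset.univ.filter (fun e => G.src e = v), (G.w e : ℤ))

/-- A sink is a vertex all of whose adjacent edges are oriented toward it. -/
def IsSink (v : Fin G.nV) : Prop :=
  ∀ e, G.Adj e v → G.tgt e = v

/-- One step of the partial order on `Vert ⊔ Edge` induced by the orientation: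
a vertex is below each of its outgoing edges, and each edge is below its target. -/
def veStep : (Fin G.nV ⊕ Fin G.nE) → (Fin G.nV ⊕ Fin G.nE) → Prop
  | Sum.inl u, Sum.inr e => G.src e = u
  | Sum.inr e, Sum.inl v => G.tgt e = v
  | _, _ => False

end WOGraph

/-- `G` is a floor diagram (relative to a conic) of genus `g` and degree `a`. -/
structure IsFloorDiagram (G : WOGraph) (g a : ℕ) : Prop where
  conn : G.Connected
  acyclic : G.Acyclic
  betti : G.nE + 1 = G.nV + g
  div_floor : ∀ v, ¬ G.InfVert v → G.div v = 2 ∨ G.div v = 4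
  div_inf : ∀ v, G.InfVert v → G.div v ≤ -1
  sink_of_two : ∀ v, ¬ G.InfVert v → G.div v = 2 → G.IsSink v
  total_div : (∑ v ∈ Finset.univ.filter (fun v => G.InfVert v), G.div v) = -(2 * (a : ℤ))

/-- The marking domain `A₀ ⊔ A₁ ⊔ ⋯ ⊔ A_k`, where
`A₀ = {1, …, a − 1 + g + l(μ₁) + l(μ₂)}` and `|Aᵢ| = bᵢ`. -/
def MarkDom (k g a : ℕ) (b : Fin k → ℕ) (l1 l2 : ℕ) : Type :=
  Fin (a + g + l1 + l2 - 1) ⊕ (Σ i : Fin k, Fin (b i))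

/-- `m` is a `d`-marking of type `(μ₁, μ₂)` of the floor diagram `G` of genus `g` and
degree `a`, where `d` is encoded by `a = d·[L]` and `bᵢ = d·[Eᵢ]`. -/
structure IsMarking (k g a : ℕ) (b : Fin k → ℕ) (μ₁ μ₂ : List ℕ) (G : WOGraph)
    (m : MarkDom k g a b μ₁.length μ₂.length → Fin G.nV ⊕ Fin G.nE) : Prop where
  inj : Function.Injective m
  /-- `m` is increasing: on `A₀` (with its natural order) it is compatible with the strict
  partial order on `Vert ⊔ Edge` induced by the orientation; the elements of
  `A₁, …, A_k` are incomparable, hence impose no condition. -/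
  incr : ∀ i j : Fin (a + g + μ₁.length + μ₂.length - 1),
    Relation.TransGen G.veStep (m (Sum.inl i)) (m (Sum.inl j)) → i < j
  /-- No floor of degree `1` is in the image of `m`. -/
  no_floor_one : ∀ v, ¬ G.InfVert v → G.div v = 2 → ∀ p, m p ≠ Sum.inl v
  /-- For `v ∈ Vert^∞` with adjacent edge `e`, exactly one of `v`, `e` is in the image. -/
  inf_pair : ∀ v, G.InfVert v → ∀ e, G.Adj e v →
    Xor' (∃ p, m p = Sum.inl v) (∃ p, m p = Sum.inr e)
  /-- `m(A₁ ∪ ⋯ ∪ A_k) ⊆ Vert^∞`. -/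
  exc_vert : ∀ (i : Fin k) (p : Fin (b i)),
    ∃ v, G.InfVert v ∧ m (Sum.inr ⟨i, p⟩) = Sum.inl v
  /-- `m({1, …, l(μ₁)}) = m(A₀) ∩ Vert^∞`. -/
  mu1_vert : ∀ i : Fin (a + g + μ₁.length + μ₂.length - 1),
    (∃ v, G.InfVert v ∧ m (Sum.inl i) = Sum.inl v) ↔ (i : ℕ) < μ₁.length
  /-- Every floor is adjacent to at most one edge adjacent to a vertex of `m(Aᵢ)`. -/
  floor_once : ∀ (i : Fin k) (v : Fin G.nV), ¬ G.InfVert v →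
    ∀ e e' : Fin G.nE, G.Adj e v → G.Adj e' v →
      (∃ (p : Fin (b i)) (u : Fin G.nV), m (Sum.inr ⟨i, p⟩) = Sum.inl u ∧ G.Adj e u) →
      (∃ (p : Fin (b i)) (u : Fin G.nV), m (Sum.inr ⟨i, p⟩) = Sum.inl u ∧ G.Adj e' u) →
      e = e'
  /-- For `i ∈ {1, …, l(μ₁)}`, the edge adjacent to `m(i)` has weight `μ₁^{(i)}`. -/
  mu1_weight : ∀ (i : Fin (a + g + μ₁.length + μ₂.length - 1)) (h : (i : ℕ) < μ₁.length)
    (v : Fin G.nV) (e : Fin G.nE),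
      m (Sum.inl i) = Sum.inl v → G.Adj e v → G.w e = μ₁.get ⟨(i : ℕ), h⟩
  /-- Exactly `l(μ₂)` edges of `Edge^∞` are in the image of `m|_{A₀}`, and their weights
  are the entries of `μ₂`. -/
  mu2_edges :
    ((Finset.univ.filter fun e : Fin G.nE =>
        G.InfEdge e ∧ ∃ i : Fin (a + g + μ₁.length + μ₂.length - 1),
          m (Sum.inl i) = Sum.inr e).val.map G.w) = (μ₂ : Multiset ℕ)

/-- A `d`-marked floor diagram of genus `g` and type `(μ₁, μ₂)`, where the class `d` is
encoded by `a = d·[L]` and `bᵢ = d·[Eᵢ]`. -/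
structure MarkedFD (k g a : ℕ) (b : Fin k → ℕ) (μ₁ μ₂ : List ℕ) where
  G : WOGraph
  m : MarkDom k g a b μ₁.length μ₂.length → Fin G.nV ⊕ Fin G.nE
  fd : IsFloorDiagram G g a
  marking : IsMarking k g a b μ₁ μ₂ G m

namespace MarkedFD

variable {k g a : ℕ} {b : Fin k → ℕ} {μ₁ μ₂ : List ℕ}

/-- Equivalence of marked floor diagrams: an isomorphism of weighted oriented graphs
together with a bijection of the marking sets which is the identity on `A₀` and maps
each `Aᵢ` (`i ≥ 1`) bijectively onto itself, compatible with the markings. -/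
def Equivalent (X Y : MarkedFD k g a b μ₁ μ₂) : Prop :=
  ∃ (φV : Fin X.G.nV ≃ Fin Y.G.nV) (φE : Fin X.G.nE ≃ Fin Y.G.nE)
    (ψ : MarkDom k g a b μ₁.length μ₂.length ≃ MarkDom k g a b μ₁.length μ₂.length),
      (∀ e, Y.G.src (φE e) = φV (X.G.src e)) ∧
      (∀ e, Y.G.tgt (φE e) = φV (X.G.tgt e)) ∧
      (∀ e, Y.G.w (φE e) = X.G.w e) ∧
      (∀ i, ψ (Sum.inl i) = Sum.inl i) ∧
      (∀ (i : Fin k) (p : Fin (b i)), ∃ p' : Fin (b i),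
        ψ (Sum.inr ⟨i, p⟩) = Sum.inr ⟨i, p'⟩) ∧
      (∀ p, Y.m (ψ p) = Sum.map φV φE (X.m p))

variable (X : MarkedFD k g a b μ₁ μ₂)

/-- `Edge^{μ₁}`: edges adjacent to `m({1, …, l(μ₁)})`. -/
def EdgeMu1 : Finset (Fin X.G.nE) :=
  Finset.univ.filter fun e =>
    ∃ i : Fin (a + g + μ₁.length + μ₂.length - 1), (i : ℕ) < μ₁.length ∧
      ∃ v, X.m (Sum.inl i) = Sum.inl v ∧ X.G.Adj e v

/-- `Edge^{μ₂}`: the `l(μ₂)` edges of `Edge^∞` in the image of `m|_{A₀}`. -/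
def EdgeMu2 : Finset (Fin X.G.nE) :=
  Finset.univ.filter fun e =>
    X.G.InfEdge e ∧ ∃ i : Fin (a + g + μ₁.length + μ₂.length - 1),
      X.m (Sum.inl i) = Sum.inr e

/-- `Edge°`: edges not in `Edge^∞`. -/
def EdgeO : Finset (Fin X.G.nE) :=
  Finset.univ.filter fun e => ¬ X.G.InfEdge e

/-- The q-refined (Block–Göttsche) multiplicity of a marked floor diagram:
`∏_{e∈Edge^{μ₂}} [w(e)]_q/w(e) · ∏_{e∈Edge^{μ₁}} [w(e)]_q/w(e) · ∏_{e∈Edge^{μ₂}} w(e)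
 · ∏_{e∈Edge°} [w(e)]_q²`. -/
def multq : LaurentPolynomial ℚ :=
  (∏ e ∈ X.EdgeMu2, (C ((X.G.w e : ℚ)⁻¹) * qInt (X.G.w e))) *
    (∏ e ∈ X.EdgeMu1, (C ((X.G.w e : ℚ)⁻¹) * qInt (X.G.w e))) *
    (∏ e ∈ X.EdgeMu2, C ((X.G.w e : ℚ))) *
    (∏ e ∈ X.EdgeO, (qInt (X.G.w e)) ^ 2)

/-- The complex multiplicity of a marked floor diagram:
`∏_i μ₂^{(i)} · ∏_{e∈Edge°} w(e)²`. -/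
def multC : ℚ :=
  (μ₂.map fun x => (x : ℚ)).prod * ∏ e ∈ X.EdgeO, (X.G.w e : ℚ) ^ 2

end MarkedFD

/-- `N` is the refined count `N_q^{μ₁,μ₂}(X_k', d, g)` of `d`-marked floor diagrams of
genus `g` and type `(μ₁, μ₂)`: the sum of the q-refined multiplicities over a (finite) set
of representatives of the equivalence classes of marked floor diagrams. -/
def IsRefinedCount (k g a : ℕ) (b : Fin k → ℕ) (μ₁ μ₂ : List ℕ)
    (N : LaurentPolynomial ℚ) : Prop :=
  ∃ (ι : Type) (hι : Fintype ι) (rep : ι → MarkedFD k g a b μ₁ μ₂),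
    (∀ X : MarkedFD k g a b μ₁ μ₂, ∃! i : ι, X.Equivalent (rep i)) ∧
    N = ∑ i ∈ @Finset.univ ι hι, (rep i).multq

/-- `N` is the complex count `N_ℂ^{μ₁,μ₂}(X_k', d, g)` of `d`-marked floor diagrams of
genus `g` and type `(μ₁, μ₂)`. -/
def IsComplexCount (k g a : ℕ) (b : Fin k → ℕ) (μ₁ μ₂ : List ℕ) (N : ℚ) : Prop :=
  ∃ (ι : Type) (hι : Fintype ι) (rep : ι → MarkedFD k g a b μ₁ μ₂),
    (∀ X : MarkedFD k g a b μ₁ μ₂, ∃! i : ι, X.Equivalent (rep i)) ∧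
    N = ∑ i ∈ @Finset.univ ι hι, (rep i).multC

end FloorDiagrams

/-!
In degree `4` the numbers of floors and of floors of degree `2` add up to `4`. A floor of degree `1`
is a sink, so every bounded edge issues from a floor of degree `2`; hence the tree of floors is a
root of degree `2` with either one leaf of degree `2` or two leaves of degree `1`. The eight ends
have total weight `8`, so they all have weight `1`, and the weight of a bounded edge is the
divergence of its leaf minus the number of ends attached to that leaf. The floors and bounded edges
marked by `A₀` are three in number, and their order is forced up to symmetry; so an equivalence
class amounts to one of the two shapes, a shuffle of these three with the two ends marked by `A₀`,
and an attachment of the eight ends to the floors.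
-/

open Finset

namespace WOGraph

variable {G : WOGraph}

lemma infVert_iff {v : Fin G.nV} :
    G.InfVert v ↔ (∃! e, G.src e = v) ∧ ∀ e, G.tgt e ≠ v := by
  have card_src : #{e | G.src e = v} = 1 ↔ ∃! e, G.src e = v := by
    simp [card_eq_one, ExistsUnique, Finset.ext_iff, iff_def, forall_and, and_comm]
  have card_tgt : #{e | G.tgt e = v} = 0 ↔ ∀ e, G.tgt e ≠ v := by
    simp [filter_eq_empty_iff]
  constructor
  · rintro ⟨hleaf, hout⟩
    have htgt : ∀ e, G.tgt e ≠ v := by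
      intro e he
      have h₁ : 0 < #{e | G.src e = v} := card_pos.2 ⟨e, by simp [hout e (Or.inr he)]⟩
      have h₂ : 0 < #{e | G.tgt e = v} := card_pos.2 ⟨e, by simp [he]⟩
      have h₃ : #{e | G.src e = v} + #{e | G.tgt e = v} = 1 := hleaf
      omega
    refine ⟨card_src.1 ?_, htgt⟩
    simpa [card_tgt.2 htgt] using (show #{e | G.src e = v} + #{e | G.tgt e = v} = 1 from hleaf)
  · rintro ⟨hsrc, htgt⟩
    refine ⟨?_, fun e he => he.resolve_right (htgt e)⟩
    rw [IsLeaf, degree, card_src.2 hsrc, card_tgt.2 htgt]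

lemma InfVert.tgt_ne {v : Fin G.nV} (h : G.InfVert v) (e : Fin G.nE) : G.tgt e ≠ v :=
  (infVert_iff.1 h).2 e

lemma InfVert.existsUnique_src {v : Fin G.nV} (h : G.InfVert v) : ∃! e, G.src e = v :=
  (infVert_iff.1 h).1

lemma InfVert.div_src {e : Fin G.nE} (h : G.InfVert (G.src e)) :
    G.div (G.src e) = -G.w e := by
  have htgt : ({e' | G.tgt e' = G.src e} : Finset (Fin G.nE)) = ∅ := by
    simp [h.tgt_ne]
  have hsrc : ({e' | G.src e' = G.src e} : Finset (Fin G.nE)) = {e} := by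
    ext e'
    simpa using ⟨fun h' => h.existsUnique_src.unique h' rfl, fun h' => h' ▸ rfl⟩
  simp [div, htgt, hsrc]

lemma infEdge_iff_infVert_src {e : Fin G.nE} : G.InfEdge e ↔ G.InfVert (G.src e) :=
  ⟨fun ⟨_, hv, h⟩ => h.2 e hv ▸ h, fun h => ⟨_, Or.inl rfl, h⟩⟩

lemma sum_div : ∑ v, G.div v = 0 := by
  unfold div
  rw [sum_sub_distrib, sum_fiberwise, sum_fiberwise, sub_self]

variable (G)

/-- The floors: the vertices outside `Vert^∞(G)`. -/
noncomputable def floors : Finset (Fin G.nV) := {v | ¬ G.InfVert v}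

/-- The floors of degree `2`, i.e. of divergence `4`. -/
noncomputable def doubleFloors : Finset (Fin G.nV) := {v ∈ G.floors | G.div v = 4}

/-- The ends, i.e. `Edge^∞(G)` as a finite set. -/
noncomputable def ends : Finset (Fin G.nE) := {e | G.InfEdge e}

/-- The bounded edges, i.e. `Edge°(G)`. -/
noncomputable def boundedEdges : Finset (Fin G.nE) := {e | ¬ G.InfEdge e}

variable {G}

@[simp] lemma mem_floors {v : Fin G.nV} : v ∈ G.floors ↔ ¬ G.InfVert v := by simp [floors]

@[simp] lemma mem_doubleFloors {v : Fin G.nV} :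
    v ∈ G.doubleFloors ↔ ¬ G.InfVert v ∧ G.div v = 4 := by simp [doubleFloors]

@[simp] lemma mem_ends {e : Fin G.nE} : e ∈ G.ends ↔ G.InfEdge e := by simp [ends]

@[simp] lemma mem_boundedEdges {e : Fin G.nE} : e ∈ G.boundedEdges ↔ ¬ G.InfEdge e := by
  simp [boundedEdges]

lemma tgt_mem_floors (e : Fin G.nE) : G.tgt e ∈ G.floors :=
  mem_floors.2 fun h => h.tgt_ne e rfl

lemma bijOn_src_ends : Set.BijOn G.src (G.ends : Set (Fin G.nE)) {v | G.InfVert v} := by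
  refine ⟨fun e he => ?_, fun e he e' _ h => ?_, fun v hv => ?_⟩
  · exact infEdge_iff_infVert_src.1 (mem_ends.1 he)
  · exact (infEdge_iff_infVert_src.1 (mem_ends.1 he)).existsUnique_src.unique rfl h.symm
  · obtain ⟨e, rfl⟩ := (show G.InfVert v from hv).existsUnique_src.exists
    exact ⟨e, mem_ends.2 (infEdge_iff_infVert_src.2 hv), rfl⟩

lemma image_src_ends : G.ends.image G.src = univ.filter fun v => G.InfVert v :=
  coe_injective (by simpa using bijOn_src_ends.image_eq)

lemma card_ends_add_card_floors : #G.ends + #G.floors = G.nV := by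
  rw [← card_image_of_injOn bijOn_src_ends.injOn, image_src_ends, floors,
    card_filter_add_card_filter_not, card_univ, Fintype.card_fin]

lemma card_ends_add_card_boundedEdges : #G.ends + #G.boundedEdges = G.nE := by
  rw [ends, boundedEdges, card_filter_add_card_filter_not, card_univ, Fintype.card_fin]

end WOGraph

namespace IsFloorDiagram

variable {G : WOGraph} {g a : ℕ} (h : IsFloorDiagram G g a)
include h

lemma card_boundedEdges_add_one : #G.boundedEdges + 1 = #G.floors + g := by
  have := h.betti
  have := G.card_ends_add_card_floors
  have := G.card_ends_add_card_boundedEdges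
  omega

lemma card_floors_add_card_doubleFloors : #G.floors + #G.doubleFloors = a := by
  have hfloor : ∀ v ∈ G.floors, G.div v = 2 + 2 * if G.div v = 4 then (1 : ℤ) else 0 := by
    intro v hv
    rcases h.div_floor v (WOGraph.mem_floors.1 hv) with hd | hd <;> rw [hd] <;> rfl
  have hsum : ∑ v ∈ G.floors, G.div v = 2 * #G.floors + 2 * #G.doubleFloors := by
    rw [sum_congr rfl hfloor, sum_add_distrib, ← mul_sum, sum_boole, sum_const]
    simp [WOGraph.doubleFloors, mul_comm]
  have hzero := G.sum_div
  rw [← sum_filter_add_sum_filter_not univ (fun v => G.InfVert v), h.total_div] at hzero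
  change _ + ∑ v ∈ G.floors, G.div v = 0 at hzero
  omega

lemma sum_w_ends : ∑ e ∈ G.ends, G.w e = 2 * a := by
  have htotal := h.total_div
  rw [← WOGraph.image_src_ends, sum_image WOGraph.bijOn_src_ends.injOn,
    sum_congr rfl fun e he =>
      (WOGraph.infEdge_iff_infVert_src.1 (WOGraph.mem_ends.1 he)).div_src,
    sum_neg_distrib, neg_inj] at htotal
  exact_mod_cast htotal

lemma src_ne_tgt (e : Fin G.nE) : G.src e ≠ G.tgt e :=
  fun he => h.acyclic _ (.single ⟨e, he, rfl⟩)

lemma src_mem_doubleFloors {e : Fin G.nE} (he : e ∈ G.boundedEdges) :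
    G.src e ∈ G.doubleFloors := by
  have hfloor := WOGraph.infEdge_iff_infVert_src.not.1 (WOGraph.mem_boundedEdges.1 he)
  refine WOGraph.mem_doubleFloors.2 ⟨hfloor, (h.div_floor _ hfloor).resolve_left fun h2 => ?_⟩
  exact h.src_ne_tgt e (h.sink_of_two _ hfloor h2 e (Or.inl rfl)).symm

lemma exists_tgt_eq_of_forall_src_eq {P v : Fin G.nV} (hP : P ∈ G.floors)
    (hsrc : ∀ e ∈ G.boundedEdges, G.src e = P) (hv : v ∈ G.floors) (hne : v ≠ P) :
    ∃ e ∈ G.boundedEdges, G.tgt e = v := by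
  let S : Set (Fin G.nV) := {u | u = P ∨ ∃ e ∈ G.boundedEdges, G.tgt e = u}
  have hS : ∀ u ∈ S, u ∈ G.floors := by
    rintro _ (rfl | ⟨e, -, rfl⟩)
    exacts [hP, G.tgt_mem_floors e]
  suffices hreach : ∀ u, u ∈ S ∨ ∃ e ∈ G.ends, G.src e = u ∧ G.tgt e ∈ S by
    rcases hreach v with (h' | h') | ⟨e, he, rfl, -⟩
    · exact absurd h' hne
    · exact h'
    · exact absurd (WOGraph.infEdge_iff_infVert_src.1 (WOGraph.mem_ends.1 he))
        (WOGraph.mem_floors.1 hv)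
  intro u
  induction h.conn.2 P u with
  | refl => exact Or.inl (Or.inl rfl)
  | tail _ hstep ih =>
    obtain ⟨e, ⟨rfl, rfl⟩ | ⟨rfl, rfl⟩⟩ := hstep
    · rcases ih with hu | ⟨e', he', hsrc', htgt'⟩
      · refine Or.inl (Or.inr ⟨e, WOGraph.mem_boundedEdges.2 fun he => ?_, rfl⟩)
        exact WOGraph.mem_floors.1 (hS _ hu) (WOGraph.infEdge_iff_infVert_src.1 he)
      · have hinf := WOGraph.infEdge_iff_infVert_src.1 (WOGraph.mem_ends.1 he')
        obtain rfl := hinf.existsUnique_src.unique rfl hsrc'.symm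
        exact Or.inl htgt'
    · rcases ih with hu | ⟨e', he', hsrc', -⟩
      · by_cases he : e ∈ G.boundedEdges
        · exact Or.inl (Or.inl (hsrc e he))
        · exact Or.inr ⟨e, by simpa using he, rfl, hu⟩
      · have hinf := WOGraph.infEdge_iff_infVert_src.1 (WOGraph.mem_ends.1 he')
        exact absurd hsrc'.symm (hinf.tgt_ne e)

end IsFloorDiagram

lemma exists_strictMono_enumeration {α β : Type*} [LinearOrder α] {f : α → β} {s : Finset β}
    {n : ℕ} (hs : ∀ y ∈ s, ∃ x, f x = y) (hn : #s = n) :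
    ∃ p : Fin n → α, StrictMono p ∧ Function.Injective (f ∘ p) ∧
      ∀ y, y ∈ s ↔ ∃ i, f (p i) = y := by
  choose g hg using hs
  have hginj : Function.Injective fun y : s => g y.1 y.2 := fun y z hyz =>
    Subtype.ext ((hg y.1 y.2).symm.trans ((congrArg f hyz).trans (hg z.1 z.2)))
  let A : Finset α := s.attach.image fun y => g y.1 y.2
  have hA : #A = n := by rw [card_image_of_injective _ hginj, card_attach, hn]
  have hfA : Set.InjOn f A := by
    rintro _ hx _ hy hxy
    simp only [A, coe_image, Set.mem_image] at hx hy
    obtain ⟨y, -, rfl⟩ := hx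
    obtain ⟨z, -, rfl⟩ := hy
    rw [hg, hg] at hxy
    rw [Subtype.ext hxy]
  refine ⟨A.orderEmbOfFin hA, (A.orderEmbOfFin hA).strictMono, fun i j hij => ?_, fun y => ?_⟩
  · exact (A.orderEmbOfFin hA).injective
      (hfA (A.orderEmbOfFin_mem hA i) (A.orderEmbOfFin_mem hA j) hij)
  · have hmem : ∀ x, x ∈ A ↔ ∃ i, A.orderEmbOfFin hA i = x := fun x => by
      rw [← Set.mem_range, range_orderEmbOfFin, mem_coe]
    constructor
    · intro hy
      obtain ⟨i, hi⟩ := (hmem _).1 (mem_image_of_mem _ (mem_attach s ⟨y, hy⟩))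
      exact ⟨i, hi ▸ hg y hy⟩
    · rintro ⟨i, rfl⟩
      obtain ⟨y, -, hy⟩ := mem_image.1 (A.orderEmbOfFin_mem hA i)
      rw [← hy, hg]
      exact y.2

namespace MarkedFD

variable {k g a : ℕ} {b : Fin k → ℕ} {μ : List ℕ} (X : MarkedFD k g a b [] μ)

lemma mark_inl_ne_infVert (i) {v : Fin X.G.nV} (hv : X.G.InfVert v) :
    X.m (Sum.inl i) ≠ Sum.inl v :=
  fun h => absurd ((X.marking.mu1_vert i).1 ⟨v, hv, h⟩) (Nat.not_lt_zero _)

lemma mark_inl_injective : Function.Injective fun i => X.m (Sum.inl i) := fun _ _ h =>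
  Sum.inl_injective (X.marking.inj h)

lemma card_edgeMu2 : #X.EdgeMu2 = μ.length :=
  (Multiset.card_map _ _).symm.trans (congrArg Multiset.card X.marking.mu2_edges)

lemma edgeMu2_subset_ends : X.EdgeMu2 ⊆ X.G.ends := fun _ he =>
  WOGraph.mem_ends.2 (mem_filter.1 he).2.1

lemma exists_mark_eq_of_mem_edgeMu2 {e : Fin X.G.nE} (he : e ∈ X.EdgeMu2) :
    ∃ i, X.m (Sum.inl i) = Sum.inr e :=
  (mem_filter.1 he).2.2

lemma exists_exceptional_end (p : Σ i, Fin (b i)) :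
    ∃ e ∈ X.G.ends, X.m (Sum.inr p) = Sum.inl (X.G.src e) := by
  obtain ⟨v, hv, hm⟩ := X.marking.exc_vert p.1 p.2
  obtain ⟨e, rfl⟩ := hv.existsUnique_src.exists
  exact ⟨e, WOGraph.mem_ends.2 (WOGraph.infEdge_iff_infVert_src.2 hv), hm⟩

/-- The end whose infinite vertex is the image of the element `p` of `A₁ ∪ ⋯ ∪ A_k`. -/
noncomputable def exceptionalEnd (p : Σ i, Fin (b i)) : Fin X.G.nE :=
  (X.exists_exceptional_end p).choose

lemma exceptionalEnd_mem_ends (p) : X.exceptionalEnd p ∈ X.G.ends :=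
  (X.exists_exceptional_end p).choose_spec.1

lemma mark_inr (p) : X.m (Sum.inr p) = Sum.inl (X.G.src (X.exceptionalEnd p)) :=
  (X.exists_exceptional_end p).choose_spec.2

lemma exceptionalEnd_injective : Function.Injective X.exceptionalEnd := fun p q h =>
  Sum.inr_injective (X.marking.inj (by rw [mark_inr, mark_inr, h]))

lemma mark_ne_exceptionalEnd (i p) : X.m i ≠ Sum.inr (X.exceptionalEnd p) := by
  intro h
  have hinf := WOGraph.infEdge_iff_infVert_src.1
    (WOGraph.mem_ends.1 (X.exceptionalEnd_mem_ends p))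
  rcases X.marking.inf_pair _ hinf _ (Or.inl rfl) with h' | h'
  exacts [h'.2 ⟨i, h⟩, h'.2 ⟨_, X.mark_inr p⟩]

lemma disjoint_edgeMu2_exceptionalEnds :
    Disjoint X.EdgeMu2 (univ.image X.exceptionalEnd) := by
  simp only [disjoint_right, mem_image, mem_univ, true_and, forall_exists_index]
  rintro _ p rfl he
  obtain ⟨i, hi⟩ := X.exists_mark_eq_of_mem_edgeMu2 he
  exact X.mark_ne_exceptionalEnd _ p hi

lemma edgeMu2_union_exceptionalEnds :
    X.EdgeMu2 ∪ univ.image X.exceptionalEnd = X.G.ends := by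
  refine Subset.antisymm (union_subset X.edgeMu2_subset_ends ?_) fun e he => ?_
  · simpa [image_subset_iff] using fun p => WOGraph.mem_ends.1 (X.exceptionalEnd_mem_ends p)
  have hinf := WOGraph.infEdge_iff_infVert_src.1 (WOGraph.mem_ends.1 he)
  rcases X.marking.inf_pair _ hinf e (Or.inl rfl) with ⟨⟨i | p, hp⟩, -⟩ | ⟨⟨i | p, hp⟩, -⟩
  · exact absurd hp (X.mark_inl_ne_infVert i hinf)
  · refine mem_union_right _ (mem_image.2 ⟨p, mem_univ p, ?_⟩)
    exact WOGraph.bijOn_src_ends.injOn (X.exceptionalEnd_mem_ends p) he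
      (Sum.inl_injective ((X.mark_inr p).symm.trans hp))
  · exact mem_union_left _ (mem_filter.2 ⟨mem_univ e, WOGraph.mem_ends.1 he, i, hp⟩)
  · rw [X.mark_inr] at hp
    exact absurd hp Sum.inl_ne_inr

lemma card_ends : #X.G.ends = μ.length + ∑ i, b i := by
  rw [← X.edgeMu2_union_exceptionalEnds, card_union_of_disjoint X.disjoint_edgeMu2_exceptionalEnds,
    X.card_edgeMu2, card_image_of_injective _ X.exceptionalEnd_injective]
  simp

lemma w_end_eq_one (hd : μ.length + ∑ i, b i = 2 * a) {e : Fin X.G.nE} (he : e ∈ X.G.ends) :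
    X.G.w e = 1 := by
  have hsum : ∑ e ∈ X.G.ends, 1 = ∑ e ∈ X.G.ends, X.G.w e := by
    rw [X.fd.sum_w_ends, sum_const, X.card_ends, hd, smul_eq_mul, mul_one]
  exact ((sum_eq_sum_iff_of_le fun e _ => X.G.w_pos e).1 hsum e he).symm

/-- The vertices and edges marked by `A₀`. -/
noncomputable def markable : Finset (Fin X.G.nV ⊕ Fin X.G.nE) :=
  X.G.doubleFloors.disjSum (X.G.boundedEdges ∪ X.EdgeMu2)

lemma mark_inl_mem_markable (i) : X.m (Sum.inl i) ∈ X.markable := by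
  rcases h : X.m (Sum.inl i) with v | e
  · have hv : ¬ X.G.InfVert v := fun hv => X.mark_inl_ne_infVert i hv h
    refine inl_mem_disjSum.2 (WOGraph.mem_doubleFloors.2 ⟨hv, ?_⟩)
    exact (X.fd.div_floor v hv).resolve_left fun h2 => X.marking.no_floor_one v hv h2 _ h
  · refine inr_mem_disjSum.2 (mem_union.2 ?_)
    by_cases he : X.G.InfEdge e
    · exact Or.inr (mem_filter.2 ⟨mem_univ e, he, i, h⟩)
    · exact Or.inl (WOGraph.mem_boundedEdges.2 he)

lemma card_markable : #X.markable + 1 = a + g + μ.length := by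
  have hdisj : Disjoint X.G.boundedEdges X.EdgeMu2 := disjoint_left.2 fun e he he' =>
    WOGraph.mem_boundedEdges.1 he (WOGraph.mem_ends.1 (X.edgeMu2_subset_ends he'))
  have h₁ := X.fd.card_boundedEdges_add_one
  have h₂ := X.fd.card_floors_add_card_doubleFloors
  rw [markable, card_disjSum, card_union_of_disjoint hdisj, X.card_edgeMu2]
  omega

lemma exists_mark_inl_eq {x} (hx : x ∈ X.markable) : ∃ i, X.m (Sum.inl i) = x := by
  have himage : univ.image (fun i => X.m (Sum.inl i)) = X.markable := by
    refine eq_of_subset_of_card_le (image_subset_iff.2 fun i _ => X.mark_inl_mem_markable i) ?_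
    rw [card_image_of_injective _ X.mark_inl_injective, card_univ,
      Fintype.card_fin]
    have := X.card_markable
    simp only [List.length_nil]
    omega
  obtain ⟨i, -, hi⟩ := mem_image.1 (himage.symm ▸ hx)
  exact ⟨i, hi⟩

lemma exists_strictMono_edge_enumeration {s : Finset (Fin X.G.nE)} {n : ℕ}
    (hs : s ⊆ X.G.boundedEdges ∪ X.EdgeMu2) (hn : #s = n) :
    ∃ (p : Fin n → Fin _) (e : Fin n → Fin X.G.nE), StrictMono p ∧ Function.Injective e ∧
      (∀ i, X.m (Sum.inl (p i)) = Sum.inr (e i)) ∧ ∀ q, q ∈ s ↔ ∃ i, e i = q := by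
  have hmark : ∀ x ∈ s.image Sum.inr, ∃ i, X.m (Sum.inl i) = x := by
    simp only [mem_image, forall_exists_index, and_imp]
    rintro _ e he rfl
    exact X.exists_mark_inl_eq (inr_mem_disjSum.2 (hs he))
  obtain ⟨p, hp, hinj, hrange⟩ := exists_strictMono_enumeration hmark
    ((card_image_of_injective _ Sum.inr_injective).trans hn)
  have hedge : ∀ i, ∃ e, X.m (Sum.inl (p i)) = Sum.inr e := fun i => by
    obtain ⟨e, -, he⟩ := mem_image.1 ((hrange _).2 ⟨i, rfl⟩)
    exact ⟨e, he.symm⟩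
  choose e he using hedge
  refine ⟨p, e, hp, fun i j hij => hinj ?_, he, fun q => ?_⟩
  · exact (he i).trans (hij ▸ (he j).symm)
  · simpa [he] using hrange (Sum.inr q)

end MarkedFD

/-- The number of elements which `t` sends to `v`. -/
def fiberCard {ι β : Type*} [Fintype ι] [DecidableEq β] (t : ι → β) (v : β) : ℕ :=
  #{i | t i = v}

/-- Sources in a star: the edges `κ` join the root `none` to the leaves `some j`, and each `i : ι`
is at once an infinite vertex and the end issued from it. -/
def starSrc {κ ι : Type*} : κ ⊕ ι → Option κ ⊕ ι := Sum.elim (fun _ => Sum.inl none) Sum.inr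

/-- Targets in the star whose ends are attached to the root and the leaves according to `t`. -/
def starTgt {κ ι : Type*} (t : ι → Option κ) : κ ⊕ ι → Option κ ⊕ ι :=
  Sum.elim (fun j => Sum.inl (some j)) fun i => Sum.inl (t i)

/-- An identification of `G` with a star all of whose ends have weight `1`. -/
structure StarLayout {κ ι : Type*} (G : WOGraph) (t : ι → Option κ) where
  vert : Option κ ⊕ ι ≃ Fin G.nV
  edge : κ ⊕ ι ≃ Fin G.nE
  src_eq : ∀ e, G.src (edge e) = vert (starSrc e)
  tgt_eq : ∀ e, G.tgt (edge e) = vert (starTgt t e)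
  w_end : ∀ i, G.w (edge (Sum.inr i)) = 1

lemma lt_of_transGen {α β : Type*} [Preorder β] {r : α → α → Prop} (f : α → β)
    (hf : ∀ x y, r x y → f x < f y) {x y : α} (h : Relation.TransGen r x y) : f x < f y := by
  induction h with
  | single hxy => exact hf _ _ hxy
  | tail _ hyz ih => exact ih.trans (hf _ _ hyz)

namespace StarLayout

variable {κ ι : Type*} {G : WOGraph} {t : ι → Option κ} (L : StarLayout G t)
include L

lemma adj_iff (e : κ ⊕ ι) (v : Option κ ⊕ ι) :
    G.Adj (L.edge e) (L.vert v) ↔ starSrc e = v ∨ starTgt t e = v := by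
  simp [WOGraph.Adj, L.src_eq, L.tgt_eq]

lemma infVert_end (i : ι) : G.InfVert (L.vert (Sum.inr i)) := by
  rw [WOGraph.infVert_iff]
  constructor
  · refine ⟨L.edge (Sum.inr i), L.src_eq _, fun e he => ?_⟩
    obtain ⟨e, rfl⟩ := L.edge.surjective e
    rw [L.src_eq, L.vert.apply_eq_iff_eq] at he
    rcases e with j | i' <;> simp_all [starSrc]
  · intro e
    obtain ⟨j | i', rfl⟩ := L.edge.surjective e <;> simp [L.tgt_eq, starTgt]

lemma not_infVert_leaf (j : κ) : ¬ G.InfVert (L.vert (Sum.inl (some j))) := fun h =>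
  h.tgt_ne (L.edge (Sum.inl j)) (L.tgt_eq _)

lemma connected : G.Connected := by
  refine ⟨(Nat.zero_le _).trans_lt (L.vert (Sum.inl none)).isLt, ?_⟩
  have : Std.Symm G.connStep := ⟨fun u v ⟨e, he⟩ => ⟨e, he.symm⟩⟩
  have floor_root : ∀ v, Relation.ReflTransGen G.connStep (L.vert (Sum.inl v))
      (L.vert (Sum.inl none)) := by
    rintro (_ | j)
    · exact .refl
    · exact .single ⟨L.edge (Sum.inl j), Or.inr ⟨L.src_eq _, L.tgt_eq _⟩⟩
  have root : ∀ v, Relation.ReflTransGen G.connStep v (L.vert (Sum.inl none)) := by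
    intro v
    obtain ⟨v | i, rfl⟩ := L.vert.surjective v
    · exact floor_root v
    · exact (floor_root (t i)).head ⟨L.edge (Sum.inr i), Or.inl ⟨L.src_eq _, L.tgt_eq _⟩⟩
  exact fun u v => (root u).trans (symm (root v))

lemma acyclic : G.Acyclic := by
  intro v hv
  let rank : Option κ ⊕ ι → ℕ := Sum.elim (fun v => v.elim 1 fun _ => 2) fun _ => 0
  refine lt_irrefl _ (lt_of_transGen (fun v => rank (L.vert.symm v)) ?_ hv)
  rintro _ _ ⟨e, rfl, rfl⟩
  obtain ⟨j | i, rfl⟩ := L.edge.surjective e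
  · simp [L.src_eq, L.tgt_eq, starSrc, starTgt, rank]
  · rcases h : t i with _ | j <;> simp [L.src_eq, L.tgt_eq, starSrc, starTgt, rank, h]

lemma div_end (i : ι) : G.div (L.vert (Sum.inr i)) = -1 := by
  have := (L.src_eq (Sum.inr i) ▸ L.infVert_end i : G.InfVert (G.src (L.edge (Sum.inr i))))
  simpa [L.w_end, L.src_eq, starSrc] using this.div_src

variable [Fintype ι]

lemma card_vert [Fintype κ] : G.nV = Fintype.card κ + 1 + Fintype.card ι := by
  simpa using (Fintype.card_congr L.vert).symm

lemma card_edge [Fintype κ] : G.nE = Fintype.card κ + Fintype.card ι := by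
  simpa using (Fintype.card_congr L.edge).symm

lemma div_leaf [Finite κ] [DecidableEq κ] (j : κ) : G.div (L.vert (Sum.inl (some j))) =
    G.w (L.edge (Sum.inl j)) + fiberCard t (some j) := by
  have := Fintype.ofFinite κ
  unfold WOGraph.div
  rw [sum_filter, sum_filter, ← Equiv.sum_comp L.edge, ← Equiv.sum_comp L.edge]
  simp [L.src_eq, L.tgt_eq, L.w_end, starSrc, starTgt, fiberCard]

variable {δ : ℕ} (hδ : ∀ j, G.div (L.vert (Sum.inl (some j))) = δ)
include hδ

lemma w_edge [Finite κ] [DecidableEq κ] (j : κ) :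
    G.w (L.edge (Sum.inl j)) = δ - fiberCard t (some j) := by
  have := (L.div_leaf j).symm.trans (hδ j)
  omega

variable [Fintype κ]

lemma div_root_add : G.div (L.vert (Sum.inl none)) + Fintype.card κ * δ = Fintype.card ι := by
  have hzero := G.sum_div
  rw [← L.vert.sum_comp, Fintype.sum_sum_type, Fintype.sum_option] at hzero
  simp only [hδ, L.div_end, sum_const, card_univ, nsmul_eq_mul] at hzero
  linarith

variable (hι : Fintype.card ι = Fintype.card κ * δ + 4)
include hι

lemma div_root : G.div (L.vert (Sum.inl none)) = 4 := by
  have := L.div_root_add hδ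
  push_cast [hι] at this
  linarith

lemma not_infVert_root : ¬ G.InfVert (L.vert (Sum.inl none)) := by
  intro h
  obtain ⟨e, he⟩ := h.existsUnique_src.exists
  have := (he ▸ h : G.InfVert (G.src e)).div_src
  rw [he, L.div_root hδ hι] at this
  omega

lemma infVert_iff (v) : G.InfVert (L.vert v) ↔ ∃ i, v = Sum.inr i := by
  rcases v with (_ | j) | i
  · simpa using L.not_infVert_root hδ hι
  · simpa using L.not_infVert_leaf j
  · simpa using L.infVert_end i

lemma infEdge_iff (e) : G.InfEdge (L.edge e) ↔ ∃ i, e = Sum.inr i := by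
  rw [WOGraph.infEdge_iff_infVert_src, L.src_eq, L.infVert_iff hδ hι]
  rcases e with j | i <;> simp [starSrc]

lemma isFloorDiagram (hδ' : δ = 2 ∨ δ = 4) {a : ℕ} (ha : Fintype.card ι = 2 * a) :
    IsFloorDiagram G 0 a where
  conn := L.connected
  acyclic := L.acyclic
  betti := by rw [L.card_vert, L.card_edge]; ring
  div_floor v hv := by
    obtain ⟨(_ | j) | i, rfl⟩ := L.vert.surjective v
    · exact Or.inr (L.div_root hδ hι)
    · rw [hδ]
      exact_mod_cast hδ'
    · exact absurd (L.infVert_end i) hv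
  div_inf v hv := by
    obtain ⟨v, rfl⟩ := L.vert.surjective v
    obtain ⟨i, rfl⟩ := (L.infVert_iff hδ hι v).1 hv
    rw [L.div_end]
  sink_of_two v hv hd e he := by
    obtain ⟨e, rfl⟩ := L.edge.surjective e
    refine he.resolve_left fun hsrc => ?_
    rw [L.src_eq] at hsrc
    subst hsrc
    rcases e with j | i
    · have := (L.div_root hδ hι).symm.trans hd
      omega
    · exact hv (L.infVert_end i)
  total_div := by
    rw [sum_filter, ← L.vert.sum_comp, Fintype.sum_sum_type]
    simp [L.infVert_iff hδ hι, L.div_end, ha]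

end StarLayout

lemma exists_starLayout {κ ι : Type*} [Finite κ] [DecidableEq κ] [Fintype ι]
    {t : ι → Option κ} {δ : ℕ} (ht : ∀ j, fiberCard t (some j) < δ) :
    ∃ (G : WOGraph) (L : StarLayout G t), ∀ j, G.div (L.vert (Sum.inl (some j))) = δ := by
  have := Fintype.ofFinite κ
  let V := Fintype.equivFin (Option κ ⊕ ι)
  let E := Fintype.equivFin (κ ⊕ ι)
  let w : κ ⊕ ι → ℕ := Sum.elim (fun j => δ - fiberCard t (some j)) fun _ => 1
  have w_pos : ∀ e, 0 < w e := by
    rintro (j | _)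
    exacts [Nat.sub_pos_of_lt (ht j), one_pos]
  let G : WOGraph :=
    { nV := _, nE := _, w := fun e => w (E.symm e), w_pos := fun e => w_pos (E.symm e)
      src := fun e => V (starSrc (E.symm e)), tgt := fun e => V (starTgt t (E.symm e)) }
  let L : StarLayout G t :=
    { vert := V, edge := E
      src_eq := fun e => congrArg (fun e => V (starSrc e)) (E.symm_apply_apply e)
      tgt_eq := fun e => congrArg (fun e => V (starTgt t e)) (E.symm_apply_apply e)
      w_end := fun _ => congrArg w (E.symm_apply_apply _) }
  have w_edge : ∀ j, G.w (L.edge (Sum.inl j)) = δ - fiberCard t (some j) := fun j =>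
    congrArg w (E.symm_apply_apply (Sum.inl j))
  refine ⟨G, L, fun j => ?_⟩
  have := ht j
  rw [L.div_leaf, w_edge]
  omega

lemma card_eq_card_of_enumeration {α κ : Type*} [Fintype κ] {s : Finset α} {q : κ → α}
    (hq : Function.Injective q) (hmem : ∀ x, x ∈ s ↔ ∃ j, q j = x) : #s = Fintype.card κ := by
  rw [← card_univ, ← card_map ⟨q, hq⟩]
  exact congrArg card (Finset.ext fun x => by simp [hmem])

lemma WOGraph.bijective_sumElim_edges {G : WOGraph} {κ ι : Type*}
    {q : κ → Fin G.nE} (hq : Function.Injective q) (hqmem : ∀ e, e ∈ G.boundedEdges ↔ ∃ j, q j = e)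
    {y : ι → Fin G.nE} (hy : Function.Injective y) (hymem : ∀ e, e ∈ G.ends ↔ ∃ i, y i = e) :
    Function.Bijective (Sum.elim q y) := by
  refine ⟨hq.sumElim hy fun j i hji => ?_, fun e => ?_⟩
  · exact mem_boundedEdges.1 ((hqmem _).2 ⟨j, rfl⟩) (mem_ends.1 ((hymem _).2 ⟨i, hji.symm⟩))
  · by_cases he : G.InfEdge e
    · obtain ⟨i, rfl⟩ := (hymem e).1 (mem_ends.2 he)
      exact ⟨Sum.inr i, rfl⟩
    · obtain ⟨j, rfl⟩ := (hqmem e).1 (mem_boundedEdges.2 he)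
      exact ⟨Sum.inl j, rfl⟩

lemma IsFloorDiagram.exists_starLayout {G : WOGraph} {a : ℕ} (h : IsFloorDiagram G 0 a)
    {κ ι : Type*} [Finite κ] [Finite ι] {P : Fin G.nV} (hP : P ∈ G.floors)
    {q : κ → Fin G.nE} (hq : Function.Injective q) (hqmem : ∀ e, e ∈ G.boundedEdges ↔ ∃ j, q j = e)
    (hsrc : ∀ j, G.src (q j) = P)
    {y : ι → Fin G.nE} (hy : Function.Injective y) (hymem : ∀ e, e ∈ G.ends ↔ ∃ i, y i = e)
    (hw : ∀ i, G.w (y i) = 1) :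
    ∃ (t : ι → Option κ) (L : StarLayout G t), L.vert (Sum.inl none) = P ∧
      (∀ j, L.edge (Sum.inl j) = q j) ∧ ∀ i, L.edge (Sum.inr i) = y i := by
  have := Fintype.ofFinite κ
  have := Fintype.ofFinite ι
  let floor : Option κ → Fin G.nV := fun v => v.elim P fun j => G.tgt (q j)
  have hfloor : ∀ v ∈ G.floors, ∃ v', floor v' = v := by
    intro v hv
    by_cases hne : v = P
    · exact ⟨none, hne.symm⟩
    obtain ⟨e, he, rfl⟩ := h.exists_tgt_eq_of_forall_src_eq hP (by simpa [hqmem] using hsrc) hv hne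
    obtain ⟨j, rfl⟩ := (hqmem e).1 he
    exact ⟨some j, rfl⟩
  have hvert : Function.Bijective (Sum.elim floor fun i => G.src (y i)) := by
    refine (Fintype.bijective_iff_surjective_and_card _).2 ⟨fun v => ?_, ?_⟩
    · by_cases hv : G.InfVert v
      · obtain ⟨e, he, rfl⟩ := WOGraph.bijOn_src_ends.surjOn hv
        obtain ⟨i, rfl⟩ := (hymem e).1 he
        exact ⟨Sum.inr i, rfl⟩
      · obtain ⟨v', rfl⟩ := hfloor v (WOGraph.mem_floors.2 hv)
        exact ⟨Sum.inl v', rfl⟩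
    · have := card_eq_card_of_enumeration hq hqmem
      have := card_eq_card_of_enumeration hy hymem
      have := h.card_boundedEdges_add_one
      have := G.card_ends_add_card_floors
      simp only [Fintype.card_sum, Fintype.card_option, Fintype.card_fin]
      omega
  have hedge := WOGraph.bijective_sumElim_edges hq hqmem hy hymem
  choose t ht using fun i => hfloor _ (G.tgt_mem_floors (y i))
  refine ⟨t, ⟨.ofBijective _ hvert, .ofBijective _ hedge, ?_, ?_, hw⟩, rfl, fun _ => rfl,
    fun _ => rfl⟩
  · rintro (j | i)
    exacts [hsrc j, rfl]
  · rintro (j | i)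
    exacts [rfl, (ht i).symm]

/-- The labels of the ends: two marked by `A₀`, and one for each exceptional class. -/
abbrev EndLabel : Type := Fin 2 ⊕ Fin 6

/-- The two trees of floors: a root of degree `2` carrying either one leaf of degree `2` or two
leaves of degree `1`. -/
inductive Shape
  | chain
  | fork
  deriving DecidableEq

namespace Shape

instance : Fintype Shape where
  elems := {chain, fork}
  complete S := by cases S <;> simp

lemma sum_univ {M : Type*} [AddCommMonoid M] (f : Shape → M) : ∑ S, f S = f chain + f fork :=
  sum_pair (by decide)

/-- The number of leaves. -/
def leaves : Shape → ℕ
  | chain => 1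
  | fork => 2

/-- The divergence of the leaves. -/
def leafDiv : Shape → ℕ
  | chain => 4
  | fork => 2

/-- The floors (`Sum.inl`) and bounded edges (`Sum.inr`) marked by `A₀`, in the order of their
marks. -/
def core : (S : Shape) → Fin 3 → Option (Fin S.leaves) ⊕ Fin S.leaves
  | chain => ![Sum.inl none, Sum.inr (0 : Fin 1), Sum.inl (some (0 : Fin 1))]
  | fork => ![Sum.inl none, Sum.inr (0 : Fin 2), Sum.inr (1 : Fin 2)]

lemma core_zero (S : Shape) : S.core 0 = Sum.inl none := by cases S <;> rfl

lemma core_injective (S : Shape) : Function.Injective S.core := by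
  cases S <;> unfold core leaves <;> decide

lemma exists_core_eq_edge {S : Shape} (j : Fin S.leaves) : ∃ r, S.core r = Sum.inr j := by
  cases S <;> revert j <;> unfold core leaves <;> decide

lemma leafDiv_eq_four {S : Shape} {r : Fin 3} {j : Fin S.leaves}
    (h : S.core r = Sum.inl (some j)) : S.leafDiv = 4 := by
  cases S
  · rfl
  · fin_cases r <;> cases h

lemma leafDiv_eq_two_or_four (S : Shape) : S.leafDiv = 2 ∨ S.leafDiv = 4 := by
  cases S <;> simp [leafDiv]

lemma card_endLabel (S : Shape) :
    Fintype.card EndLabel = Fintype.card (Fin S.leaves) * S.leafDiv + 4 := by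
  cases S <;> rfl

lemma leaves_injective : Function.Injective leaves := by
  rintro (_ | _) (_ | _) h <;> first | rfl | cases h

/-- The marked vertices and edges of the star: its core and the two ends marked by `A₀`, and the
infinite vertices marked by the exceptional classes. -/
def markedElt (S : Shape) : (Fin 3 ⊕ Fin 2) ⊕ Fin 6 →
    (Option (Fin S.leaves) ⊕ EndLabel) ⊕ (Fin S.leaves ⊕ EndLabel) :=
  Sum.elim (Sum.elim (Sum.map Sum.inl Sum.inl ∘ S.core) fun a => Sum.inr (Sum.inr (Sum.inl a)))
    fun j => Sum.inl (Sum.inr (Sum.inr j))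

lemma markedElt_injective (S : Shape) : Function.Injective S.markedElt := by
  refine (((Sum.map_injective.2 ⟨Sum.inl_injective, Sum.inl_injective⟩).comp
    S.core_injective).sumElim (fun a b h => by simpa using h) fun r a => ?_).sumElim
      (fun a b h => by simpa using h) ?_
  · rcases h : S.core r with v | j <;> simp [h]
  · rintro (r | a) j
    · rcases h : S.core r with v | j <;> simp [h]
    · simp

lemma markedElt_eq_floor {S : Shape} {r} {v : Option (Fin S.leaves)} :
    S.markedElt r = Sum.inl (Sum.inl v) ↔
      ∃ r', r = Sum.inl (Sum.inl r') ∧ S.core r' = Sum.inl v := by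
  rcases r with (r | a) | j
  · rcases h : S.core r with v | j <;> simp [markedElt, h]
  · simp [markedElt]
  · simp [markedElt]

lemma markedElt_eq_infVert {S : Shape} {r} {i : EndLabel} :
    S.markedElt r = Sum.inl (Sum.inr i) ↔ ∃ j, r = Sum.inr j ∧ i = Sum.inr j := by
  rcases r with (r | a) | j
  · rcases h : S.core r with v | j <;> simp [markedElt, h]
  · simp [markedElt]
  · simp [markedElt, eq_comm]

lemma markedElt_eq_end {S : Shape} {r} {i : EndLabel} :
    S.markedElt r = Sum.inr (Sum.inr i) ↔ ∃ a, r = Sum.inl (Sum.inr a) ∧ i = Sum.inl a := by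
  rcases r with (r | a) | j
  · rcases h : S.core r with v | j <;> simp [markedElt, h]
  · simp [markedElt, eq_comm]
  · simp [markedElt]

end Shape

/-- The ways of interleaving `1 < ⋯ < p` with `1 < ⋯ < q`. -/
def Shuffle (p q : ℕ) : Type :=
  {σ : Fin p ⊕ Fin q ≃ Fin (p + q) // StrictMono (σ ∘ Sum.inl) ∧ StrictMono (σ ∘ Sum.inr)}

namespace Shuffle

variable {p q : ℕ}

instance : Fintype (Shuffle p q) :=
  inferInstanceAs (Fintype {σ : Fin p ⊕ Fin q ≃ Fin (p + q) //
    StrictMono (σ ∘ Sum.inl) ∧ StrictMono (σ ∘ Sum.inr)})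

lemma ext_of_range {σ τ : Shuffle p q}
    (h : Set.range (σ.1 ∘ Sum.inr) = Set.range (τ.1 ∘ Sum.inr)) : σ = τ := by
  have range_inl : ∀ σ : Shuffle p q,
      Set.range (σ.1 ∘ Sum.inl) = (Set.range (σ.1 ∘ Sum.inr))ᶜ := fun σ => by
    rw [Set.range_comp, Set.range_comp, ← Set.image_compl_eq σ.1.bijective, Set.compl_range_inr]
  have hl : σ.1 ∘ Sum.inl = τ.1 ∘ Sum.inl :=
    (σ.2.1.range_inj τ.2.1).1 (by rw [range_inl, range_inl, h])
  have hr : σ.1 ∘ Sum.inr = τ.1 ∘ Sum.inr := (σ.2.2.range_inj τ.2.2).1 h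
  refine Subtype.ext (Equiv.ext ?_)
  rintro (i | i)
  exacts [congrFun hl i, congrFun hr i]

end Shuffle

/-- In the order `σ` of the marks of `A₀`, each end is marked before the floor to which `u`
attaches it. -/
def EndsPrecede (S : Shape) (σ : Shuffle 3 2) (u : Fin 2 → Option (Fin S.leaves)) : Prop :=
  ∀ a r, S.core r = Sum.inl (u a) → σ.1 (Sum.inr a) < σ.1 (Sum.inl r)

instance (S : Shape) (σ : Shuffle 3 2) (u : Fin 2 → Option (Fin S.leaves)) :
    Decidable (EndsPrecede S σ u) :=
  inferInstanceAs (Decidable (∀ a r, S.core r = Sum.inl (u a) → σ.1 (Sum.inr a) < σ.1 (Sum.inl r)))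

/-- The conditions on the order `σ` in which `A₀` marks the core and its two ends, and on the
floors `t` to which the ends are attached, under which they describe a marked floor diagram: the
marking is increasing, and the bounded edges have positive weight. -/
def Admissible (S : Shape) (σ : Shuffle 3 2) (t : EndLabel → Option (Fin S.leaves)) : Prop :=
  EndsPrecede S σ (t ∘ Sum.inl) ∧ ∀ j, fiberCard t (some j) < S.leafDiv

/-- A function increasing along the orientation of the star, which extends the order of the
marking. -/
def starRank (S : Shape) (σ : Shuffle 3 2) :
    (Option (Fin S.leaves) ⊕ EndLabel) ⊕ (Fin S.leaves ⊕ EndLabel) → ℕ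
  | Sum.inl (Sum.inr _) => 0
  | Sum.inr (Sum.inr (Sum.inr _)) => 1
  | Sum.inr (Sum.inr (Sum.inl a)) => σ.1 (Sum.inr a) + 2
  | Sum.inl (Sum.inl none) => σ.1 (Sum.inl 0) + 2
  | Sum.inr (Sum.inl j) => σ.1 (Sum.inl (Fin.ofNat 3 (j + 1))) + 2
  | Sum.inl (Sum.inl (some _)) =>
    match S with
    | .chain => σ.1 (Sum.inl 2) + 2
    | .fork => 7

lemma starRank_markedElt (S : Shape) (σ : Shuffle 3 2) (r) :
    starRank S σ (S.markedElt (Sum.inl r)) = σ.1 r + 2 := by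
  rcases r with r | a
  · cases S <;> fin_cases r <;> rfl
  · rfl

lemma starRank_src_lt (S : Shape) (σ : Shuffle 3 2) (e) :
    starRank S σ (Sum.inl (starSrc e)) < starRank S σ (Sum.inr e) := by
  rcases e with j | _ | _
  · have hlt : ∀ r : Fin 3, 0 < r → (σ.1 (Sum.inl 0) : ℕ) + 2 < σ.1 (Sum.inl r) + 2 := fun r hr =>
      Nat.add_lt_add_right (σ.2.1 hr) 2
    refine hlt _ ?_
    cases S <;> fin_cases j <;> decide
  · exact Nat.succ_pos _
  · exact one_pos

lemma starRank_lt_tgt {S : Shape} {σ : Shuffle 3 2} {t : EndLabel → Option (Fin S.leaves)}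
    (h : Admissible S σ t) (e) :
    starRank S σ (Sum.inr e) < starRank S σ (Sum.inl (starTgt t e)) := by
  rcases e with j | a | j
  · cases S
    · fin_cases j
      exact Nat.add_lt_add_right (σ.2.1 (show (1 : Fin 3) < 2 by decide)) 2
    · exact Nat.add_lt_add_right (σ.1 _).isLt 2
  · have hlt := fun r (hr : S.core r = Sum.inl (t (Sum.inl a))) =>
      Nat.add_lt_add_right (Fin.lt_def.1 (h.1 a r hr)) 2
    rcases ht : t (Sum.inl a) with _ | j
    · simpa [starTgt, ht, starRank] using hlt 0 (by rw [ht, S.core_zero])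
    · cases S
      · obtain rfl : j = (0 : Fin 1) := Subsingleton.elim (α := Fin 1) _ _
        simpa [starTgt, ht, starRank] using hlt 2 (by rw [ht]; rfl)
      · simpa [starTgt, ht, starRank] using Nat.add_lt_add_right (σ.1 (Sum.inr a)).isLt 2
  · rcases ht : t (Sum.inr j) with _ | j
    · simp [starTgt, ht, starRank]
    · cases S <;> simp [starTgt, ht, starRank]

/-- The marking set of the class `4[L] − Σ [E_i]`, for the type `(∅, (1, 1))`. -/
abbrev QuarticDom : Type :=
  MarkDom 6 0 4 (fun _ => 1) ([] : List ℕ).length ([1, 1] : List ℕ).length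

/-- The marked floor diagrams of the class `4[L] − Σ [E_i]`, of genus `0` and type `(∅, (1, 1))`. -/
abbrev MarkedQuartic : Type := MarkedFD 6 0 4 (fun _ => 1) [] [1, 1]

/-- The numbering of the marks when `A₀` marks the core and its two ends in the order `σ`. -/
def markIndex (σ : Shuffle 3 2) : (Fin 3 ⊕ Fin 2) ⊕ Fin 6 ≃ QuarticDom :=
  Equiv.sumCongr σ.1 (Equiv.sigmaUnique (Fin 6) fun _ => Fin 1).symm

lemma markIndex_inr (σ : Shuffle 3 2) (j : Fin 6) (p : Fin 1) :
    markIndex σ (Sum.inr j) = Sum.inr ⟨j, p⟩ := by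
  rw [Subsingleton.elim p 0]
  rfl

/-- The identification of the vertices and edges of `G` with those of the star. -/
def StarLayout.elt {κ ι : Type*} {G : WOGraph} {t : ι → Option κ} (L : StarLayout G t) :
    (Option κ ⊕ ι) ⊕ (κ ⊕ ι) ≃ Fin G.nV ⊕ Fin G.nE :=
  Equiv.sumCongr L.vert L.edge

/-- An identification of `(G, m)` with the star of shape `S` with ends attached according to `t`,
marked in the order `σ`. -/
structure Presentation {G : WOGraph} (m : QuarticDom → Fin G.nV ⊕ Fin G.nE) (S : Shape)
    (σ : Shuffle 3 2) (t : EndLabel → Option (Fin S.leaves)) extends StarLayout G t where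
  div_leaf : ∀ j, G.div (vert (Sum.inl (some j))) = S.leafDiv
  mark : ∀ r, m (markIndex σ r) = toStarLayout.elt (S.markedElt r)

namespace Presentation

variable {G : WOGraph} {m : QuarticDom → Fin G.nV ⊕ Fin G.nE} {S : Shape} {σ : Shuffle 3 2}
  {t : EndLabel → Option (Fin S.leaves)}

section

variable (P : Presentation m S σ t)
include P

lemma infVert_iff (v) : G.InfVert (P.vert v) ↔ ∃ i, v = Sum.inr i :=
  P.toStarLayout.infVert_iff P.div_leaf S.card_endLabel v

lemma infEdge_iff (e) : G.InfEdge (P.edge e) ↔ ∃ i, e = Sum.inr i :=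
  P.toStarLayout.infEdge_iff P.div_leaf S.card_endLabel e

lemma exists_mark_eq_iff (x) : (∃ p, m p = P.elt x) ↔ ∃ r, S.markedElt r = x := by
  simp [← (markIndex σ).exists_congr_right, P.mark]

lemma mark_inl (r) : m (Sum.inl (σ.1 r)) = P.elt (S.markedElt (Sum.inl r)) :=
  P.mark (Sum.inl r)

lemma mark_inr (j : Fin 6) (p : Fin 1) :
    m (Sum.inr ⟨j, p⟩) = Sum.inl (P.vert (Sum.inr (Sum.inr j))) :=
  markIndex_inr σ j p ▸ P.mark (Sum.inr j)

lemma exists_mark_inl_eq_end_iff (i : EndLabel) :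
    (∃ p, m (Sum.inl p) = Sum.inr (P.edge (Sum.inr i))) ↔ ∃ a, i = Sum.inl a := by
  constructor
  · rintro ⟨p, hp⟩
    obtain ⟨r, rfl⟩ := σ.1.surjective p
    rw [P.mark_inl] at hp
    obtain ⟨a, -, ha⟩ := Shape.markedElt_eq_end.1 (P.elt.injective hp)
    exact ⟨a, ha⟩
  · rintro ⟨a, rfl⟩
    exact ⟨_, P.mark_inl (Sum.inr a)⟩

lemma mark_injective : Function.Injective m := by
  have : m = P.elt ∘ S.markedElt ∘ (markIndex σ).symm := by
    rw [← Function.comp_assoc, Equiv.eq_comp_symm]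
    exact funext P.mark
  rw [this]
  exact P.elt.injective.comp (S.markedElt_injective.comp (markIndex σ).symm.injective)

lemma lt_of_transGen_veStep (h : Admissible S σ t) {r r' : Fin 3 ⊕ Fin 2}
    (hr : Relation.TransGen G.veStep (m (Sum.inl (σ.1 r))) (m (Sum.inl (σ.1 r')))) :
    σ.1 r < σ.1 r' := by
  have hlt := lt_of_transGen (fun x => starRank S σ (P.elt.symm x)) ?_ hr
  · simpa [P.mark_inl, starRank_markedElt] using hlt
  intro x y hxy
  obtain ⟨v | e, rfl⟩ := P.elt.surjective x <;> obtain ⟨v' | e', rfl⟩ := P.elt.surjective y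
  · exact hxy.elim
  · obtain rfl : starSrc e' = v := P.vert.injective ((P.src_eq e').symm.trans hxy)
    simpa using starRank_src_lt S σ e'
  · obtain rfl : starTgt t e = v' := P.vert.injective ((P.tgt_eq e).symm.trans hxy)
    simpa using starRank_lt_tgt h e
  · exact hxy.elim

lemma mark_ne_of_div_eq_two {v : Fin G.nV} (hv : ¬ G.InfVert v) (hd : G.div v = 2) (p) :
    m p ≠ Sum.inl v := by
  intro hp
  obtain ⟨v | i, rfl⟩ := P.vert.surjective v
  · obtain ⟨r, hr⟩ := (P.exists_mark_eq_iff (Sum.inl (Sum.inl v))).1 ⟨p, hp⟩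
    obtain ⟨r, -, hr⟩ := Shape.markedElt_eq_floor.1 hr
    rcases v with _ | j
    · rw [P.div_root P.div_leaf S.card_endLabel] at hd
      omega
    · rw [P.div_leaf, Shape.leafDiv_eq_four hr] at hd
      omega
  · exact hv (P.infVert_end i)

lemma eq_end_of_adj {i : EndLabel} {e : Fin G.nE} (h : G.Adj e (P.vert (Sum.inr i))) :
    e = P.edge (Sum.inr i) := by
  obtain ⟨e, rfl⟩ := P.edge.surjective e
  rw [P.adj_iff] at h
  rcases e with e | e <;> simp_all [starSrc, starTgt]

lemma infVert_marked_iff {v : Fin G.nV} (hv : G.InfVert v) {e : Fin G.nE} (he : G.Adj e v) :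
    (∃ p, m p = Sum.inl v) ↔ ¬ ∃ p, m p = Sum.inr e := by
  obtain ⟨v, rfl⟩ := P.vert.surjective v
  obtain ⟨i, rfl⟩ := (P.infVert_iff v).1 hv
  obtain rfl := P.eq_end_of_adj he
  change (∃ p, m p = P.elt (Sum.inl (Sum.inr i))) ↔ ¬ ∃ p, m p = P.elt (Sum.inr (Sum.inr i))
  rw [P.exists_mark_eq_iff, P.exists_mark_eq_iff]
  simp only [Shape.markedElt_eq_infVert, Shape.markedElt_eq_end]
  rcases i with a | j <;> simp

lemma mark_inl_ne_infVert (p) {v : Fin G.nV} (hv : G.InfVert v) : m (Sum.inl p) ≠ Sum.inl v := by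
  intro hp
  obtain ⟨v, rfl⟩ := P.vert.surjective v
  obtain ⟨i, rfl⟩ := (P.infVert_iff v).1 hv
  obtain ⟨r, rfl⟩ := σ.1.surjective p
  rw [P.mark_inl] at hp
  obtain ⟨j, hj, -⟩ := Shape.markedElt_eq_infVert.1
    (P.elt.injective (a₂ := Sum.inl (Sum.inr i)) hp)
  cases hj

lemma eq_end_of_adj_mark_inr {i : Fin 6} {e : Fin G.nE}
    (h : ∃ (p : Fin 1) (u : Fin G.nV), m (Sum.inr ⟨i, p⟩) = Sum.inl u ∧ G.Adj e u) :
    e = P.edge (Sum.inr (Sum.inr i)) := by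
  obtain ⟨p, u, hu, he⟩ := h
  obtain rfl := Sum.inl_injective ((P.mark_inr i p).symm.trans hu)
  exact P.eq_end_of_adj he

lemma markedEnds_eq : ({e | G.InfEdge e ∧ ∃ p, m (Sum.inl p) = Sum.inr e} : Finset (Fin G.nE)) =
    univ.image fun a => P.edge (Sum.inr (Sum.inl a)) := by
  ext e
  obtain ⟨e, rfl⟩ := P.edge.surjective e
  simp only [mem_filter, mem_univ, true_and, mem_image, P.infEdge_iff,
    P.edge.apply_eq_iff_eq]
  constructor
  · rintro ⟨⟨i, rfl⟩, hi⟩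
    obtain ⟨a, rfl⟩ := (P.exists_mark_inl_eq_end_iff i).1 hi
    exact ⟨a, rfl⟩
  · rintro ⟨a, rfl⟩
    exact ⟨⟨_, rfl⟩, (P.exists_mark_inl_eq_end_iff _).2 ⟨a, rfl⟩⟩

lemma isMarking (h : Admissible S σ t) : IsMarking 6 0 4 (fun _ => 1) [] [1, 1] G m where
  inj := P.mark_injective
  incr i j hij := by
    obtain ⟨r, rfl⟩ := σ.1.surjective i
    obtain ⟨r', rfl⟩ := σ.1.surjective j
    exact P.lt_of_transGen_veStep h hij
  no_floor_one v hv hd := P.mark_ne_of_div_eq_two hv hd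
  inf_pair v hv e he := xor_iff_iff_not.2 (P.infVert_marked_iff hv he)
  exc_vert i p := ⟨_, P.infVert_end (Sum.inr i), P.mark_inr i p⟩
  mu1_vert i := iff_of_false (fun ⟨_, hv, hm⟩ => P.mark_inl_ne_infVert i hv hm) (Nat.not_lt_zero _)
  floor_once i v _ e e' _ _ he he' :=
    (P.eq_end_of_adj_mark_inr he).trans (P.eq_end_of_adj_mark_inr he').symm
  mu1_weight i hi := absurd hi (Nat.not_lt_zero _)
  mu2_edges := by
    rw [P.markedEnds_eq, image_val_of_injOn fun a _ b _ hab => by simpa using hab, Multiset.map_map]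
    simp only [Function.comp_def, P.w_end]
    rfl

lemma isFloorDiagram : IsFloorDiagram G 0 4 :=
  P.toStarLayout.isFloorDiagram P.div_leaf S.card_endLabel S.leafDiv_eq_two_or_four rfl

end

end Presentation

lemma exists_presentation {S : Shape} {σ : Shuffle 3 2} {t : EndLabel → Option (Fin S.leaves)}
    (h : Admissible S σ t) : ∃ X : MarkedQuartic, Nonempty (Presentation X.m S σ t) := by
  obtain ⟨G, L, hL⟩ := exists_starLayout h.2
  let P : Presentation (L.elt ∘ S.markedElt ∘ (markIndex σ).symm) S σ t :=
    { L with
      div_leaf := hL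
      mark := fun r => by simp }
  exact ⟨⟨G, _, P.isFloorDiagram, P.isMarking h⟩, ⟨P⟩⟩

lemma qInt_one : qInt 1 = 1 := by
  simp [qInt]

namespace Presentation

variable {X Y : MarkedQuartic} {S : Shape} {σ : Shuffle 3 2} {t : EndLabel → Option (Fin S.leaves)}

lemma multq_eq (P : Presentation X.m S σ t) :
    X.multq = ∏ j, qInt (S.leafDiv - fiberCard t (some j)) ^ 2 := by
  have w_eq_one : ∀ e ∈ X.EdgeMu2, X.G.w e = 1 := fun e he => by
    obtain ⟨e, rfl⟩ := P.edge.surjective e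
    obtain ⟨i, rfl⟩ := (P.infEdge_iff e).1 (mem_filter.1 he).2.1
    exact P.w_end i
  have prod_ends : ∏ e ∈ X.EdgeMu2, (C ((X.G.w e : ℚ)⁻¹) * qInt (X.G.w e)) = 1 :=
    prod_eq_one fun e he => by simp [w_eq_one e he, qInt_one]
  have prod_weights : ∏ e ∈ X.EdgeMu2, (C (X.G.w e : ℚ) : LaurentPolynomial ℚ) = 1 :=
    prod_eq_one fun e he => by simp [w_eq_one e he]
  have edgeMu1_eq : X.EdgeMu1 = ∅ := by simp [MarkedFD.EdgeMu1]
  rw [MarkedFD.multq, prod_ends, prod_weights, edgeMu1_eq, MarkedFD.EdgeO, prod_filter,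
    ← Equiv.prod_comp P.edge, Fintype.prod_sum_type]
  simp [P.infEdge_iff, P.w_edge P.div_leaf]

lemma equivalent (P : Presentation X.m S σ t) (Q : Presentation Y.m S σ t) : X.Equivalent Y := by
  refine ⟨P.vert.symm.trans Q.vert, P.edge.symm.trans Q.edge, Equiv.refl _, fun e => ?_,
    fun e => ?_, fun e => ?_, fun i => rfl, fun i p => ⟨p, rfl⟩, fun p => ?_⟩
  · obtain ⟨e, rfl⟩ := P.edge.surjective e
    simp [P.src_eq, Q.src_eq]
  · obtain ⟨e, rfl⟩ := P.edge.surjective e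
    simp [P.tgt_eq, Q.tgt_eq]
  · obtain ⟨j | i, rfl⟩ := P.edge.surjective e
    · simp [P.w_edge P.div_leaf, Q.w_edge Q.div_leaf]
    · simp [P.w_end, Q.w_end]
  · obtain ⟨r, rfl⟩ := (markIndex σ).surjective p
    refine (Q.mark r).trans ?_
    rw [P.mark]
    rcases S.markedElt r with v | e <;> simp [StarLayout.elt]

lemma of_equivalent (h : X.Equivalent Y) (Q : Presentation Y.m S σ t) :
    Nonempty (Presentation X.m S σ t) := by
  obtain ⟨φV, φE, ψ, hsrc, htgt, hw, hψ, hψ', hm⟩ := h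
  have ψ_eq : ∀ p, ψ p = p := by
    rintro (i | ⟨i, p⟩)
    · exact hψ i
    · obtain ⟨p', hp'⟩ := hψ' i p
      rw [hp', Subsingleton.elim (α := Fin 1) p' p]
  let L : StarLayout X.G t :=
    { vert := Q.vert.trans φV.symm
      edge := Q.edge.trans φE.symm
      src_eq := fun e => φV.injective (by simp [← hsrc, Q.src_eq])
      tgt_eq := fun e => φV.injective (by simp [← htgt, Q.tgt_eq])
      w_end := fun i => by simp [← hw, Q.w_end] }
  refine ⟨⟨L, fun j => ?_, fun r => ?_⟩⟩
  · rw [L.div_leaf, ← Q.div_leaf j, StarLayout.div_leaf, ← hw]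
    simp [L]
  · refine (Sum.map_injective.2 ⟨φV.injective, φE.injective⟩) ((hm _).symm.trans ?_)
    rw [ψ_eq, Q.mark]
    rcases S.markedElt r with v | e <;> simp [StarLayout.elt, L]

lemma admissible (P : Presentation X.m S σ t) : Admissible S σ t := by
  refine ⟨fun a r hr => X.marking.incr _ _ (Relation.TransGen.single ?_), fun j => ?_⟩
  · have hedge : X.m (Sum.inl (σ.1 (Sum.inr a))) = Sum.inr (P.edge (Sum.inr (Sum.inl a))) :=
      P.mark_inl _
    have hfloor : X.m (Sum.inl (σ.1 (Sum.inl r))) = Sum.inl (P.vert (Sum.inl (t (Sum.inl a)))) := by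
      rw [P.mark_inl]
      simp [Shape.markedElt, hr, StarLayout.elt]
    exact hedge ▸ hfloor ▸ P.tgt_eq (Sum.inr (Sum.inl a))
  · have := (P.toStarLayout.div_leaf j).symm.trans (P.div_leaf j)
    have := X.G.w_pos (P.edge (Sum.inl j))
    omega

section Unique

variable {S' : Shape} {σ' : Shuffle 3 2} {t' : EndLabel → Option (Fin S'.leaves)}

lemma shape_eq (P : Presentation X.m S σ t) (Q : Presentation X.m S' σ' t') : S = S' := by
  have := P.card_vert.symm.trans Q.card_vert
  simp only [Fintype.card_fin] at this
  exact Shape.leaves_injective (by omega)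

lemma range_endMarks (P : Presentation X.m S σ t) :
    Set.range (σ.1 ∘ Sum.inr) = {i | ∃ e, X.G.InfEdge e ∧ X.m (Sum.inl i) = Sum.inr e} := by
  ext i
  constructor
  · rintro ⟨a, rfl⟩
    exact ⟨_, (P.infEdge_iff _).2 ⟨_, rfl⟩, P.mark_inl (Sum.inr a)⟩
  · rintro ⟨e, he, hi⟩
    obtain ⟨e, rfl⟩ := P.edge.surjective e
    obtain ⟨e, rfl⟩ := (P.infEdge_iff e).1 he
    obtain ⟨r, rfl⟩ := σ.1.surjective i
    rw [P.mark_inl] at hi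
    obtain ⟨a, ha, -⟩ := Shape.markedElt_eq_end.1
      (P.elt.injective (a₂ := Sum.inr (Sum.inr e)) hi)
    exact ⟨a, congrArg σ.1 (Sum.inl_injective ha).symm⟩

lemma shuffle_eq (P : Presentation X.m S σ t) (Q : Presentation X.m S' σ' t') : σ = σ' :=
  Shuffle.ext_of_range (P.range_endMarks.trans Q.range_endMarks.symm)

end Unique

section Attach

variable {t' : EndLabel → Option (Fin S.leaves)} (P : Presentation X.m S σ t)
  (Q : Presentation X.m S σ t')
include P Q

lemma elt_markedElt_eq (r) : P.elt (S.markedElt r) = Q.elt (S.markedElt r) :=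
  (P.mark r).symm.trans (Q.mark r)

lemma edge_end_eq (i : EndLabel) : P.edge (Sum.inr i) = Q.edge (Sum.inr i) := by
  rcases i with a | j
  · exact Sum.inr_injective (P.elt_markedElt_eq Q (Sum.inl (Sum.inr a)))
  · have hvert : P.vert (Sum.inr (Sum.inr j)) = Q.vert (Sum.inr (Sum.inr j)) :=
      Sum.inl_injective (P.elt_markedElt_eq Q (Sum.inr j))
    exact (P.infVert_end _).existsUnique_src.unique (P.src_eq _) (hvert ▸ Q.src_eq _)

lemma vert_floor_eq (v : Option (Fin S.leaves)) : P.vert (Sum.inl v) = Q.vert (Sum.inl v) := by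
  have core_eq : ∀ r, P.elt (Sum.map Sum.inl Sum.inl (S.core r)) =
      Q.elt (Sum.map Sum.inl Sum.inl (S.core r)) := fun r =>
    P.elt_markedElt_eq Q (Sum.inl (Sum.inl r))
  rcases v with _ | j
  · have := core_eq 0
    rw [S.core_zero] at this
    exact Sum.inl_injective this
  · obtain ⟨r, hr⟩ := Shape.exists_core_eq_edge j
    have := core_eq r
    rw [hr] at this
    have hedge : P.edge (Sum.inl j) = Q.edge (Sum.inl j) := Sum.inr_injective this
    exact (P.tgt_eq (Sum.inl j)).symm.trans (hedge ▸ Q.tgt_eq (Sum.inl j))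

lemma attach_eq : t = t' := by
  funext i
  have htgt := (P.tgt_eq (Sum.inr i)).symm.trans (P.edge_end_eq Q i ▸ Q.tgt_eq (Sum.inr i))
  rw [starTgt, starTgt, Sum.elim_inr, Sum.elim_inr, P.vert_floor_eq Q] at htgt
  exact Sum.inl_injective (Q.vert.injective htgt)

end Attach

end Presentation

lemma IsFloorDiagram.exists_shape {G : WOGraph} (h : IsFloorDiagram G 0 4) :
    ∃ (S : Shape) (P : Fin G.nV), #G.boundedEdges = S.leaves ∧ P ∈ G.doubleFloors ∧
      (∀ e ∈ G.boundedEdges, G.src e = P) ∧ ∀ v ∈ G.floors, v ≠ P → G.div v = S.leafDiv := by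
  have hsub : G.doubleFloors ⊆ G.floors := fun v hv =>
    WOGraph.mem_floors.2 (WOGraph.mem_doubleFloors.1 hv).1
  have hbounded := h.card_boundedEdges_add_one
  have hdouble := h.card_floors_add_card_doubleFloors
  have hle := card_le_card hsub
  have hpos : 0 < #G.doubleFloors := by
    by_contra! hzero
    obtain ⟨e, he⟩ := card_pos.1 (show 0 < #G.boundedEdges by omega)
    exact absurd (card_pos.2 ⟨_, h.src_mem_doubleFloors he⟩) hzero.not_gt
  obtain hone | htwo : #G.boundedEdges = 1 ∨ #G.boundedEdges = 2 := by omega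
  · obtain ⟨e, he⟩ := card_eq_one.1 hone
    refine ⟨.chain, G.src e, hone, h.src_mem_doubleFloors (he ▸ mem_singleton_self e),
      fun e' he' => ?_, fun v hv _ => ?_⟩
    · rw [he, mem_singleton] at he'
      rw [he']
    · rw [← eq_of_subset_of_card_le hsub (by omega)] at hv
      exact (WOGraph.mem_doubleFloors.1 hv).2
  · obtain ⟨P, hP⟩ := card_eq_one.1 (show #G.doubleFloors = 1 by omega)
    refine ⟨.fork, P, htwo, hP ▸ mem_singleton_self P,
      fun e he => mem_singleton.1 (hP ▸ h.src_mem_doubleFloors he), fun v hv hne => ?_⟩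
    have hv := WOGraph.mem_floors.1 hv
    refine (h.div_floor v hv).resolve_right fun h4 => hne (mem_singleton.1 (hP ▸ ?_))
    exact WOGraph.mem_doubleFloors.2 ⟨hv, h4⟩

namespace MarkedFD

variable (X : MarkedQuartic)

lemma exists_end_enumeration : ∃ (p : Fin 2 → Fin 5) (y : EndLabel → Fin X.G.nE),
    StrictMono p ∧ Function.Injective y ∧ (∀ e, e ∈ X.G.ends ↔ ∃ i, y i = e) ∧
      (∀ a, X.m (Sum.inl (p a)) = Sum.inr (y (Sum.inl a))) ∧
      ∀ j, X.m (Sum.inr j) = Sum.inl (X.G.src (y (Sum.inr j.1))) := by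
  obtain ⟨p, e, hp, he, hmark, hmem⟩ :=
    X.exists_strictMono_edge_enumeration subset_union_right X.card_edgeMu2
  have hexc : ∀ p : Σ _ : Fin 6, Fin 1, p = ⟨p.1, 0⟩ := fun ⟨i, p⟩ => by
    rw [Subsingleton.elim p 0]
  refine ⟨p, Sum.elim e fun j => X.exceptionalEnd ⟨j, (0 : Fin 1)⟩, hp, ?_, fun f => ?_, hmark,
    fun j => ?_⟩
  · refine he.sumElim (fun j j' hj => congrArg Sigma.fst (X.exceptionalEnd_injective hj))
      fun a j haj => disjoint_left.1 X.disjoint_edgeMu2_exceptionalEnds ((hmem _).2 ⟨a, rfl⟩) ?_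
    exact haj ▸ mem_image_of_mem _ (mem_univ _)
  · rw [← X.edgeMu2_union_exceptionalEnds, mem_union, hmem, mem_image, Sum.exists]
    refine or_congr Iff.rfl ⟨fun ⟨q, _, hq⟩ => ⟨q.1, ?_⟩, fun ⟨j, hj⟩ => ⟨_, mem_univ _, hj⟩⟩
    rw [← hq, hexc q]
    rfl
  · rw [X.mark_inr, hexc j]
    rfl

lemma lt_of_veStep {i j} {x y : Fin X.G.nV ⊕ Fin X.G.nE} (hi : X.m (Sum.inl i) = x)
    (hj : X.m (Sum.inl j) = y) (h : X.G.veStep x y) : i < j :=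
  X.marking.incr i j (.single (hi ▸ hj ▸ h))

lemma exists_core_marks {S : Shape} {t : EndLabel → Option (Fin S.leaves)}
    (L : StarLayout X.G t) (hroot : L.vert (Sum.inl none) ∈ X.G.doubleFloors)
    (hleaf : ∀ j, X.G.div (L.vert (Sum.inl (some j))) = S.leafDiv) {p : Fin S.leaves → Fin 5}
    (hp : StrictMono p) (hmark : ∀ j, X.m (Sum.inl (p j)) = Sum.inr (L.edge (Sum.inl j))) :
    ∃ c : Fin 3 → Fin 5, StrictMono c ∧
      ∀ r, X.m (Sum.inl (c r)) = L.elt (Sum.map Sum.inl Sum.inl (S.core r)) := by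
  obtain ⟨i, hi⟩ := X.exists_mark_inl_eq (inl_mem_disjSum.2 hroot)
  have root_lt : ∀ j, i < p j := fun j => X.lt_of_veStep hi (hmark j) (L.src_eq _)
  cases S
  · have hdouble : L.vert (Sum.inl (some (0 : Fin 1))) ∈ X.G.doubleFloors :=
      WOGraph.mem_doubleFloors.2 ⟨L.not_infVert_leaf _, hleaf _⟩
    obtain ⟨k, hk⟩ := X.exists_mark_inl_eq (inl_mem_disjSum.2 hdouble)
    have lt_leaf : p (0 : Fin 1) < k := X.lt_of_veStep (hmark _) hk (L.tgt_eq _)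
    refine ⟨![i, p (0 : Fin 1), k], Fin.strictMono_iff_lt_succ.2 fun r => ?_, fun r => ?_⟩
    · fin_cases r
      exacts [root_lt _, lt_leaf]
    · fin_cases r
      exacts [hi, hmark _, hk]
  · refine ⟨![i, p (0 : Fin 2), p (1 : Fin 2)], Fin.strictMono_iff_lt_succ.2 fun r => ?_,
      fun r => ?_⟩
    · fin_cases r
      exacts [root_lt _, hp (show (0 : Fin 2) < 1 by decide)]
    · fin_cases r
      exacts [hi, hmark _, hmark _]

lemma exists_presentation : ∃ (S : Shape) (σ : Shuffle 3 2) (t : EndLabel → Option (Fin S.leaves)),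
    Nonempty (Presentation X.m S σ t) := by
  obtain ⟨S, P, hcard, hP, hsrc, hdiv⟩ := X.fd.exists_shape
  obtain ⟨p, q, hp, hq, hpq, hqmem⟩ :=
    X.exists_strictMono_edge_enumeration subset_union_left hcard
  obtain ⟨p', y, hp', hy, hymem, hpy, hexc⟩ := X.exists_end_enumeration
  obtain ⟨t, L, hL, hLq, hLy⟩ := X.fd.exists_starLayout
    (WOGraph.mem_floors.2 (WOGraph.mem_doubleFloors.1 hP).1) hq hqmem
    (fun j => hsrc _ ((hqmem _).2 ⟨j, rfl⟩)) hy hymem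
    fun i => X.w_end_eq_one rfl ((hymem _).2 ⟨i, rfl⟩)
  have hleaf : ∀ j, X.G.div (L.vert (Sum.inl (some j))) = S.leafDiv := fun j =>
    hdiv _ (WOGraph.mem_floors.2 (L.not_infVert_leaf j)) fun h => by
      simpa using L.vert.injective (h.trans hL.symm)
  obtain ⟨c, hc, hcmark⟩ := X.exists_core_marks L (hL ▸ hP) hleaf hp
    fun j => (hpq j).trans (congrArg Sum.inr (hLq j).symm)
  have hmark : ∀ r, X.m (Sum.inl (Sum.elim c p' r)) = L.elt (S.markedElt (Sum.inl r)) := by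
    rintro (r | a)
    · exact hcmark r
    · exact (hpy a).trans (congrArg Sum.inr (hLy (Sum.inl a)).symm)
  have hbij : Function.Bijective (Sum.elim c p') := by
    refine (Fintype.bijective_iff_injective_and_card _).2 ⟨fun r r' h => ?_, rfl⟩
    exact Sum.inl_injective (S.markedElt_injective (L.elt.injective
      ((hmark r).symm.trans ((congrArg (X.m ∘ Sum.inl) h).trans (hmark r')))))
  refine ⟨S, ⟨.ofBijective _ hbij, hc, hp'⟩, t, ⟨⟨L, hleaf, ?_⟩⟩⟩
  rintro (r | j)
  · exact hmark r
  · refine (hexc _).trans ?_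
    exact congrArg Sum.inl ((congrArg X.G.src (hLy (Sum.inr j))).symm.trans (L.src_eq _))

end MarkedFD

lemma fiberCard_sumElim {ι₁ ι₂ β : Type*} [Fintype ι₁] [Fintype ι₂] [DecidableEq β] (t₁ : ι₁ → β)
    (t₂ : ι₂ → β) (v : β) :
    fiberCard (Sum.elim t₁ t₂) v = fiberCard t₁ v + fiberCard t₂ v := by
  simp only [fiberCard, card_filter, Fintype.sum_sum_type, Sum.elim_inl, Sum.elim_inr]
  rfl

lemma fiberCard_cons {n : ℕ} {β : Type*} [DecidableEq β] (v w : β) (t : Fin n → β) :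
    fiberCard (Fin.cons v t : Fin (n + 1) → β) w = fiberCard t w + if v = w then 1 else 0 := by
  simp only [fiberCard, card_filter, Fin.sum_univ_succ, Fin.cons_zero, Fin.cons_succ]
  exact add_comm _ _

lemma sum_fiberCard_some_default {ι κ M : Type*} [Fintype ι] [DecidableEq ι] [Unique κ]
    [DecidableEq κ] [CommSemiring M] (ψ : ℕ → M) :
    ∑ t : ι → Option κ, ψ (fiberCard t (some default)) =
      ∑ c ∈ range (Fintype.card ι + 1), ((Fintype.card ι).choose c : M) * ψ c := by
  have h := sum_powerset_apply_card ψ (x := (univ : Finset ι))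
  simp only [card_univ, nsmul_eq_mul] at h
  rw [← h]
  refine sum_bij' (fun t _ => ({i | t i = some default} : Finset ι))
    (fun A _ i => if i ∈ A then some default else none) (by simp) (by simp) (fun t _ => ?_)
    (fun A _ => by ext; simp) fun _ _ => rfl
  funext i
  rcases ht : t i with _ | j
  · simp [ht]
  · simp [ht, Unique.eq_default j]

lemma sum_fiberCard_some_some {M : Type*} [CommRing M] (n : ℕ) (ψ : ℕ → ℕ → M)
    (h₁ : ∀ a b, 2 ≤ a → ψ a b = 0) (h₂ : ∀ a b, 2 ≤ b → ψ a b = 0) :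
    ∑ t : Fin n → Option (Fin 2), ψ (fiberCard t (some 0)) (fiberCard t (some 1)) =
      ψ 0 0 + n * (ψ 1 0 + ψ 0 1) + n * (n - 1) * ψ 1 1 := by
  induction n generalizing ψ with
  | zero => simp [fiberCard]
  | succ n ih =>
    rw [← (Fin.consEquiv fun _ => Option (Fin 2)).sum_comp, Fintype.sum_prod_type_right]
    have hn := ih (fun a b => ψ a b + (ψ (a + 1) b + ψ a (b + 1)))
      (fun a b h => by simp [h₁ a b h, h₁ a (b + 1) h, h₁ (a + 1) b (by omega)])
      (fun a b h => by simp [h₂ a b h, h₂ (a + 1) b h, h₂ a (b + 1) (by omega)])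
    refine (sum_congr rfl fun t _ => ?_).trans (hn.trans ?_)
    · simp [Fintype.sum_option, Fin.sum_univ_two, Fin.consEquiv, fiberCard_cons]
    · simp only [zero_add, Nat.reduceAdd, h₁ 2 _ le_rfl, h₂ _ 2 le_rfl]
      push_cast
      ring

/-- The labels of the equivalence classes of marked floor diagrams of shape `S`. -/
abbrev MarkedStar (S : Shape) : Type :=
  {x : Shuffle 3 2 × (EndLabel → Option (Fin S.leaves)) // Admissible S x.1 x.2}

lemma qInt_zero : qInt 0 = 0 := by simp [qInt]

lemma qInt_sub_eq_zero {m n : ℕ} (h : m ≤ n) : qInt (m - n) = 0 := by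
  rw [Nat.sub_eq_zero_of_le h, qInt_zero]

/-- The total contribution of the ends marked by the exceptional classes to `n` leaves of divergence
`δ`, when `c j` of the ends marked by `A₀` are attached to the leaf `j`. -/
noncomputable def exceptionalSum (δ : ℕ) {n : ℕ} (c : Fin n → ℕ) : LaurentPolynomial ℚ :=
  ∑ t : Fin 6 → Option (Fin n), ∏ j, qInt (δ - (c j + fiberCard t (some j))) ^ 2

namespace Shape

variable (S : Shape)

/-- The number of ways to order the core and the two ends marked by `A₀`, and to attach these ends
to the floors, so that `c j` of them are attached to the leaf `j` and each end is marked before its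
floor. -/
def orderCount (c : Fin S.leaves → Fin 3) : ℕ :=
  #{y : Shuffle 3 2 × (Fin 2 → Option (Fin S.leaves)) |
    EndsPrecede S y.1 y.2 ∧ ∀ j, fiberCard y.2 (some j) = c j}

lemma sum_markedStar_eq_sum_endsPrecede :
    ∑ x : MarkedStar S, ∏ j, qInt (S.leafDiv - fiberCard x.1.2 (some j)) ^ 2 =
      ∑ y : Shuffle 3 2 × (Fin 2 → Option (Fin S.leaves)) with EndsPrecede S y.1 y.2,
        exceptionalSum S.leafDiv fun j => fiberCard y.2 (some j) := by
  rw [← sum_subtype (p := fun x => Admissible S x.1 x.2) {x | Admissible S x.1 x.2} (by simp)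
    fun x : Shuffle 3 2 × (EndLabel → Option (Fin S.leaves)) =>
      ∏ j, qInt (S.leafDiv - fiberCard x.2 (some j)) ^ 2,
    sum_filter, sum_filter, Fintype.sum_prod_type, Fintype.sum_prod_type]
  refine sum_congr rfl fun σ _ => ?_
  rw [← (Equiv.sumArrowEquivProdArrow (Fin 2) (Fin 6) _).symm.sum_comp, Fintype.sum_prod_type]
  refine sum_congr rfl fun u _ => ?_
  by_cases hu : EndsPrecede S σ u
  · rw [if_pos hu]
    refine sum_congr rfl fun t _ => ?_
    trans ∏ j, qInt (S.leafDiv - fiberCard (Sum.elim u t) (some j)) ^ 2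
    · refine ite_eq_left_iff.2 fun h => ?_
      -- The weight condition is automatic on nonzero terms, since `qInt 0 = 0`.
      obtain ⟨j, hj⟩ := not_forall.1 fun hw => h ⟨hu, hw⟩
      exact (prod_eq_zero (mem_univ j) (by simp [qInt_sub_eq_zero (not_lt.1 hj)])).symm
    · simp only [fiberCard_sumElim]
  · rw [if_neg hu]
    exact sum_eq_zero fun t _ => if_neg fun h => hu h.1

lemma sum_markedStar_eq_sum_orderCount :
    ∑ x : MarkedStar S, ∏ j, qInt (S.leafDiv - fiberCard x.1.2 (some j)) ^ 2 =
      ∑ c, S.orderCount c * exceptionalSum S.leafDiv fun j => c j := by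
  let f (y : Shuffle 3 2 × (Fin 2 → Option (Fin S.leaves))) (j : Fin S.leaves) : Fin 3 :=
    ⟨fiberCard y.2 (some j), Nat.lt_succ_of_le (card_le_univ (α := Fin 2) _)⟩
  rw [sum_markedStar_eq_sum_endsPrecede]
  refine (sum_fiberwise' _ f fun c => exceptionalSum S.leafDiv fun j => c j).symm.trans
    (sum_congr rfl fun c _ => ?_)
  simp only [sum_const, nsmul_eq_mul, orderCount, f, funext_iff, Fin.ext_iff, filter_filter]

end Shape

lemma orderCount_chain (c : Fin 1 → Fin 3) :
    Shape.chain.orderCount c = ![1, 4, 6] (c 0) := by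
  revert c
  unfold Shape.orderCount EndsPrecede Shape.core Shape.leaves
  decide +kernel

lemma orderCount_fork (c : Fin 2 → Fin 3) :
    Shape.fork.orderCount c = ![![1, 5, 10], ![5, 20, 0], ![10, 0, 0]] (c 0) (c 1) := by
  revert c
  unfold Shape.orderCount EndsPrecede Shape.core Shape.leaves
  decide +kernel

lemma exceptionalSum_one (δ : ℕ) (c : Fin 1 → ℕ) :
    exceptionalSum δ c = ∑ k ∈ range 7, Nat.choose 6 k * qInt (δ - (c 0 + k)) ^ 2 := by
  simp only [exceptionalSum, Fin.prod_univ_one]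
  exact sum_fiberCard_some_default (κ := Fin 1) fun k => qInt (δ - (c 0 + k)) ^ 2

lemma exceptionalSum_two (c : Fin 2 → ℕ) :
    exceptionalSum 2 c =
      qInt (2 - c 0) ^ 2 * qInt (2 - c 1) ^ 2 +
        6 * (qInt (2 - (c 0 + 1)) ^ 2 * qInt (2 - c 1) ^ 2 +
          qInt (2 - c 0) ^ 2 * qInt (2 - (c 1 + 1)) ^ 2) +
        30 * (qInt (2 - (c 0 + 1)) ^ 2 * qInt (2 - (c 1 + 1)) ^ 2) := by
  have hz : ∀ m k, 2 ≤ k → qInt (2 - (m + k)) = 0 := fun m k hk => qInt_sub_eq_zero (by omega)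
  simp only [exceptionalSum, Fin.prod_univ_two]
  rw [sum_fiberCard_some_some 6 (fun k l => qInt (2 - (c 0 + k)) ^ 2 * qInt (2 - (c 1 + l)) ^ 2)
    (fun k l hk => by simp [hz _ k hk]) (fun k l hl => by simp [hz _ l hl])]
  norm_num

lemma sum_markedStar_chain :
    ∑ x : MarkedStar .chain, ∏ j, qInt (Shape.chain.leafDiv - fiberCard x.1.2 (some j)) ^ 2 =
      qInt 4 ^ 2 + 10 * qInt 3 ^ 2 + 45 * qInt 2 ^ 2 + 116 := by
  calc
    _ = ∑ c : Fin 1 → Fin 3, (![1, 4, 6] (c 0) : ℕ) * exceptionalSum 4 fun j => c j :=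
      (Shape.sum_markedStar_eq_sum_orderCount _).trans
        (sum_congr rfl fun c _ => congrArg (Nat.cast · * _) (orderCount_chain c))
    _ = ∑ c : Fin 3, (![1, 4, 6] c : ℕ) * exceptionalSum 4 fun _ : Fin 1 => c :=
      (Equiv.funUnique (Fin 1) (Fin 3)).symm.sum_comp _ |>.symm
    _ = _ := by
      simp [Fin.sum_univ_three, exceptionalSum_one, sum_range_succ, Nat.choose, qInt_zero, qInt_one]
      ring

lemma sum_markedStar_fork :
    ∑ x : MarkedStar .fork, ∏ j, qInt (Shape.fork.leafDiv - fiberCard x.1.2 (some j)) ^ 2 =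
      qInt 2 ^ 4 + 22 * qInt 2 ^ 2 + 110 := by
  calc
    _ = ∑ c : Fin 2 → Fin 3, (![![1, 5, 10], ![5, 20, 0], ![10, 0, 0]] (c 0) (c 1) : ℕ) *
          exceptionalSum 2 fun j => c j :=
      (Shape.sum_markedStar_eq_sum_orderCount _).trans
        (sum_congr rfl fun c _ => congrArg (Nat.cast · * _) (orderCount_fork c))
    _ = ∑ c : Fin 3 × Fin 3, (![![1, 5, 10], ![5, 20, 0], ![10, 0, 0]] c.1 c.2 : ℕ) *
          exceptionalSum 2 fun j => ![c.1, c.2] j :=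
      (finTwoArrowEquiv (Fin 3)).symm.sum_comp _ |>.symm
    _ = _ := by
      simp [Fintype.sum_prod_type, Fin.sum_univ_three, exceptionalSum_two, qInt_zero, qInt_one]
      ring

/-- In `X₆'` (`k = 6`), for the class `d = 4[L] − Σ_{i=1}^6 [E_i]`
(so `a = 4`, `bᵢ = 1` for all `i`, and `d·[E] = 2`), the refined count of `d`-marked
floor diagrams of genus `0` and type `(∅,(1,1))` is
`N_q^{∅,(1,1)} = [2]_q⁴ + [4]_q² + 10[3]_q² + 67[2]_q² + 226`. -/
theorem refined_count_4L_type_empty_11 :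
    IsRefinedCount 6 0 4 (fun _ => 1) [] [1, 1]
      (qInt 2 ^ 4 + qInt 4 ^ 2 + 10 * qInt 3 ^ 2 + 67 * qInt 2 ^ 2 + 226) := by
  choose rep hrep using fun x : Σ S, MarkedStar S => exists_presentation x.2.2
  have P := fun x => (hrep x).some
  refine ⟨Σ S, MarkedStar S, inferInstance, rep, fun X => ?_, ?_⟩
  · obtain ⟨S, σ, t, ⟨Q⟩⟩ := X.exists_presentation
    refine ⟨⟨S, (σ, t), Q.admissible⟩, Q.equivalent (P ⟨S, _⟩), ?_⟩
    rintro ⟨S', ⟨σ', t'⟩, h'⟩ hX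
    obtain ⟨Q'⟩ := Presentation.of_equivalent hX (P _)
    obtain rfl := Presentation.shape_eq Q Q'
    obtain rfl := Presentation.shuffle_eq Q Q'
    obtain rfl := Presentation.attach_eq Q Q'
    rfl
  · rw [Fintype.sum_congr _ _ fun x => (P x).multq_eq, Fintype.sum_sigma, Shape.sum_univ,
      sum_markedStar_chain, sum_markedStar_fork]
    ring
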